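/- For any real t with t ≥ 1, if x, y > 0 satisfy the concave superadditivity hypothesis at exponent 1/t implicitly, then: for convex bodies K, L in R^m and 0 < t < 1, writing μ = S(L,·) − t·S(K,·) where S(K,·) ≤ S(L,·) as measures, μ is a positive measure with zero barycenter on S^{m−1} which is not concentrated on any great subsphere; hence there is a convex body M with S(M,·) = μ and L = M # (t^{1/(m−1)} K) up to translation. -/

import Mathlib

open MeasureTheory Set
open scoped ENNReal Pointwise RealInnerProductSpace Topology

noncomputable section

abbrev Euc (m : ℕ) : Type := EuclideanSpace ℝ (Fin m)

/-- A convex body: compact convex set with nonempty interior. -/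
def IsConvexBody {m : ℕ} (K : Set (Euc m)) : Prop :=
  Convex ℝ K ∧ IsCompact K ∧ (interior K).Nonempty

/-- A (compact convex) polytope: convex hull of a finite set. -/
def IsPolytope {m : ℕ} (P : Set (Euc m)) : Prop :=
  ∃ s : Finset (Euc m), P = convexHull ℝ (s : Set (Euc m))

def unitSphere (m : ℕ) : Set (Euc m) := Metric.sphere 0 1

/-- `n` is an outward unit normal to `K` at the boundary point `x`. -/
def IsOutwardNormalAt {m : ℕ} (K : Set (Euc m)) (x n : Euc m) : Prop :=
  x ∈ frontier K ∧ ‖n‖ = 1 ∧ ∀ y ∈ K, ⟪y - x, n⟫ ≤ 0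

open Classical in
/-- The (set-valued choice of) Gauss map of `K`. -/
def gaussMap {m : ℕ} (K : Set (Euc m)) (x : Euc m) : Euc m :=
  if h : ∃ n, IsOutwardNormalAt K x n then h.choose else 0

/-- The surface area measure of `K`: the pushforward under the Gauss map of the
`(m-1)`-dimensional Hausdorff measure on the boundary of `K`. -/
def surfMeasure {m : ℕ} (K : Set (Euc m)) : Measure (Euc m) :=
  Measure.map (gaussMap K) (μH[(m : ℝ) - 1].restrict (frontier K))

/-- The face of `P` in direction `n`. -/
def faceIn {m : ℕ} (P : Set (Euc m)) (n : Euc m) : Set (Euc m) :=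
  {x ∈ P | ∀ y ∈ P, ⟪y, n⟫ ≤ ⟪x, n⟫}

/-- The `(m-1)`-dimensional volume of the face of `P` in direction `n`. -/
def faceArea {m : ℕ} (P : Set (Euc m)) (n : Euc m) : ℝ≥0∞ :=
  μH[(m : ℝ) - 1] (faceIn P n)

/-- `n` is the outward unit normal to a facet ((m-1)-dimensional face) of `P`. -/
def IsFacetNormal {m : ℕ} (P : Set (Euc m)) (n : Euc m) : Prop :=
  ‖n‖ = 1 ∧ 0 < faceArea P n

/-- The gauge `x ↦ max_{‖u‖ = 1} ⟪x, u⟫ q(u)`; its unit ball is the Wulff shape of `1 / q`. -/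
def wulffGauge {m : ℕ} (q : Euc m → ℝ) (x : Euc m) : ℝ :=
  sSup ((fun u => ⟪x, u⟫ * q u) '' unitSphere m)

lemma isCompact_unitSphere (m : ℕ) : IsCompact (unitSphere m) := isCompact_sphere _ _

lemma unitSphere_nonempty (d : ℕ) : (unitSphere (d + 1)).Nonempty :=
  NormedSpace.sphere_nonempty.2 zero_le_one

lemma mem_unitSphere {m : ℕ} {u : Euc m} : u ∈ unitSphere m ↔ ‖u‖ = 1 := by
  simp [unitSphere]

section WulffGauge

variable {d : ℕ} {q : Euc (d + 1) → ℝ}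

lemma exists_wulffGauge_eq (hq : Continuous q) (x : Euc (d + 1)) :
    ∃ u ∈ unitSphere (d + 1), wulffGauge q x = ⟪x, u⟫ * q u := by
  have hc : ContinuousOn (fun u => ⟪x, u⟫ * q u) (unitSphere (d + 1)) := by fun_prop
  exact (isCompact_unitSphere _).exists_sSup_image_eq (unitSphere_nonempty d) hc

lemma le_wulffGauge (hq : Continuous q) (x : Euc (d + 1)) {u : Euc (d + 1)}
    (hu : u ∈ unitSphere (d + 1)) : ⟪x, u⟫ * q u ≤ wulffGauge q x := by
  have hc : ContinuousOn (fun u => ⟪x, u⟫ * q u) (unitSphere (d + 1)) := by fun_prop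
  exact le_csSup ((isCompact_unitSphere _).image_of_continuousOn hc).bddAbove
    (mem_image_of_mem _ hu)

lemma wulffGauge_le_iff (hq : Continuous q) (x : Euc (d + 1)) (c : ℝ) :
    wulffGauge q x ≤ c ↔ ∀ u ∈ unitSphere (d + 1), ⟪x, u⟫ * q u ≤ c := by
  constructor
  · exact fun h u hu => (le_wulffGauge hq x hu).trans h
  · intro h
    obtain ⟨u, hu, e⟩ := exists_wulffGauge_eq hq x
    exact e ▸ h u hu

lemma wulffGauge_smul (hq : Continuous q) {c : ℝ} (hc : 0 ≤ c) (x : Euc (d + 1)) :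
    wulffGauge q (c • x) = c * wulffGauge q x := by
  apply le_antisymm
  · rw [wulffGauge_le_iff hq]
    intro u hu
    rw [real_inner_smul_left, mul_assoc]
    exact mul_le_mul_of_nonneg_left (le_wulffGauge hq x hu) hc
  · obtain ⟨u, hu, e⟩ := exists_wulffGauge_eq hq x
    rw [e, ← mul_assoc, ← real_inner_smul_left]
    exact le_wulffGauge hq _ hu

lemma wulffGauge_le_norm (hq : Continuous q) {Q : ℝ} (hQ : ∀ u, |q u| ≤ Q) (x : Euc (d + 1)) :
    wulffGauge q x ≤ Q * ‖x‖ := by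
  rw [wulffGauge_le_iff hq]
  intro u hu
  calc ⟪x, u⟫ * q u ≤ |⟪x, u⟫ * q u| := le_abs_self _
    _ = |⟪x, u⟫| * |q u| := abs_mul _ _
    _ ≤ (‖x‖ * ‖u‖) * Q := by
        gcongr
        · exact abs_real_inner_le_norm x u
        · exact hQ u
    _ = Q * ‖x‖ := by rw [mem_unitSphere.1 hu]; ring

lemma wulffGauge_add_le (hq : Continuous q) (x y : Euc (d + 1)) :
    wulffGauge q (x + y) ≤ wulffGauge q x + wulffGauge q y := by
  rw [wulffGauge_le_iff hq]
  intro u hu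
  rw [inner_add_left, add_mul]
  exact add_le_add (le_wulffGauge hq x hu) (le_wulffGauge hq y hu)

lemma norm_le_wulffGauge (hq : Continuous q) {c : ℝ} (hc : ∀ u, c ≤ q u) (x : Euc (d + 1)) :
    c * ‖x‖ ≤ wulffGauge q x := by
  by_cases hx : x = 0
  · subst hx
    obtain ⟨u, hu⟩ := unitSphere_nonempty d
    simpa using le_wulffGauge hq 0 hu
  have hx' : ‖x‖ ≠ 0 := norm_ne_zero_iff.2 hx
  have hu : ‖x‖⁻¹ • x ∈ unitSphere (d + 1) := by
    rw [mem_unitSphere, norm_smul, norm_inv, norm_norm, inv_mul_cancel₀ hx']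
  have h := le_wulffGauge hq x hu
  rw [real_inner_smul_right, real_inner_self_eq_norm_sq] at h
  have e : ‖x‖⁻¹ * ‖x‖ ^ 2 = ‖x‖ := by field_simp
  rw [e] at h
  nlinarith [hc (‖x‖⁻¹ • x), norm_nonneg x]

lemma lipschitzWith_wulffGauge (hq : Continuous q) {Q : NNReal} (hQ : ∀ u, |q u| ≤ Q) :
    LipschitzWith Q (wulffGauge q) := by
  refine LipschitzWith.of_le_add_mul Q fun x y => ?_
  have h := wulffGauge_add_le hq y (x - y)
  rw [add_sub_cancel] at h
  rw [dist_eq_norm]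
  exact h.trans (add_le_add_right (wulffGauge_le_norm hq hQ _) _)

/-- At a point of differentiability, the gradient points in the direction of the maximiser. -/
lemma fderiv_wulffGauge (hq : Continuous q) {x u : Euc (d + 1)}
    (hx : DifferentiableAt ℝ (wulffGauge q) x) (hu : u ∈ unitSphere (d + 1))
    (e : wulffGauge q x = ⟪x, u⟫ * q u) (y : Euc (d + 1)) :
    fderiv ℝ (wulffGauge q) x y = ⟪y, u⟫ * q u := by
  have hl : HasFDerivAt (fun y : Euc (d + 1) => ⟪y, u⟫ * q u)
      (q u • innerSL ℝ u) x := by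
    have : (fun y : Euc (d + 1) => ⟪y, u⟫ * q u) = fun y => (q u • innerSL ℝ u) y := by
      ext y; simp [real_inner_comm, mul_comm]
    rw [this]
    exact (q u • innerSL ℝ u).hasFDerivAt
  have hmin : IsLocalMin (fun y => wulffGauge q y - ⟪y, u⟫ * q u) x := by
    refine Filter.Eventually.of_forall fun y => ?_
    simp only [e, sub_self]
    exact sub_nonneg.2 (le_wulffGauge hq y hu)
  have h0 := hmin.hasFDerivAt_eq_zero (hx.hasFDerivAt.sub hl)
  rw [sub_eq_zero] at h0
  rw [h0]
  simp [real_inner_comm, mul_comm]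

/-- The unit direction of the gradient of the gauge. -/
def gaugeNormal (q : Euc (d + 1) → ℝ) (x : Euc (d + 1)) : Euc (d + 1) :=
  ‖gradient (wulffGauge q) x‖⁻¹ • gradient (wulffGauge q) x

lemma gaugeNormal_eq (hq : Continuous q) (hpos : ∀ u, 0 < q u) {x u : Euc (d + 1)}
    (hx : DifferentiableAt ℝ (wulffGauge q) x) (hu : u ∈ unitSphere (d + 1))
    (e : wulffGauge q x = ⟪x, u⟫ * q u) : gaugeNormal q x = u := by
  have hg : gradient (wulffGauge q) x = q u • u := by
    refine ext_inner_right ℝ fun y => ?_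
    rw [gradient, InnerProductSpace.toDual_symm_apply, fderiv_wulffGauge hq hx hu e,
      real_inner_smul_left, real_inner_comm, mul_comm]
  rw [gaugeNormal, hg, norm_smul, mem_unitSphere.1 hu, mul_one, Real.norm_of_nonneg (hpos u).le,
    smul_smul, inv_mul_cancel₀ (hpos u).ne', one_smul]

lemma gaugeNormal_mem (hq : Continuous q) (hpos : ∀ u, 0 < q u) {x : Euc (d + 1)}
    (hx : DifferentiableAt ℝ (wulffGauge q) x) :
    gaugeNormal q x ∈ unitSphere (d + 1) ∧
      wulffGauge q x = ⟪x, gaugeNormal q x⟫ * q (gaugeNormal q x) := by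
  obtain ⟨u, hu, e⟩ := exists_wulffGauge_eq hq x
  rw [gaugeNormal_eq hq hpos hx hu e]
  exact ⟨hu, e⟩

lemma measurable_gaugeNormal (q : Euc (d + 1) → ℝ) : Measurable (gaugeNormal q) := by
  have h : Measurable (gradient (wulffGauge q)) :=
    (InnerProductSpace.toDual ℝ (Euc (d + 1))).symm.continuous.measurable.comp
      (measurable_fderiv ℝ _)
  exact (h.norm.inv).smul h

lemma fderiv_wulffGauge_smul (hq : Continuous q) {c : ℝ} (hc : 0 < c) (x : Euc (d + 1)) :
    fderiv ℝ (wulffGauge q) (c • x) = fderiv ℝ (wulffGauge q) x := by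
  have h1 : fderiv ℝ (fun y => wulffGauge q (c • y)) x = c • fderiv ℝ (wulffGauge q) (c • x) :=
    fderiv_comp_smul c
  have h2 : (fun y => wulffGauge q (c • y)) = c • wulffGauge q := by
    ext y; simp [wulffGauge_smul hq hc.le]
  rw [h2, fderiv_const_smul_field] at h1
  exact (smul_right_injective _ hc.ne' h1).symm

lemma gaugeNormal_smul (hq : Continuous q) {c : ℝ} (hc : 0 < c) (x : Euc (d + 1)) :
    gaugeNormal q (c • x) = gaugeNormal q x := by
  simp only [gaugeNormal, gradient, fderiv_wulffGauge_smul hq hc]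

lemma differentiableAt_wulffGauge_smul (hq : Continuous q) {c : ℝ} (hc : 0 < c)
    {x : Euc (d + 1)} (hx : DifferentiableAt ℝ (wulffGauge q) x) :
    DifferentiableAt ℝ (wulffGauge q) (c • x) := by
  have h2 : wulffGauge q = fun y => c * wulffGauge q (c⁻¹ • y) := by
    ext y
    rw [wulffGauge_smul hq (inv_nonneg.2 hc.le), mul_inv_cancel_left₀ hc.ne']
  rw [h2]
  refine DifferentiableAt.const_mul ?_ c
  have : DifferentiableAt ℝ (wulffGauge q) (c⁻¹ • (c • x)) := by
    rwa [smul_smul, inv_mul_cancel₀ hc.ne', one_smul]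
  exact this.comp (c • x) (differentiableAt_id.const_smul c⁻¹)

end WulffGauge

section Radial

variable {d : ℕ} {g : Euc (d + 1) → ℝ} {C : Set (Euc (d + 1))}

lemma volume_cone_inter_le (hg : ∀ c : ℝ, 0 < c → ∀ x, g (c • x) = c * g x)
    (hC : ∀ c : ℝ, 0 < c → ∀ x ∈ C, c • x ∈ C) {s : ℝ} (hs : 0 < s) :
    volume (C ∩ {x | g x ≤ s}) = ENNReal.ofReal (s ^ (d + 1)) * volume (C ∩ {x | g x ≤ 1}) := by
  have h : C ∩ {x | g x ≤ s} = s • (C ∩ {x | g x ≤ 1}) := by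
    ext x
    rw [mem_smul_set_iff_inv_smul_mem₀ hs.ne']
    simp only [mem_inter_iff, mem_ofPred_eq, hg _ (inv_pos.2 hs)]
    refine and_congr ⟨hC _ (inv_pos.2 hs) x, fun h => ?_⟩ ?_
    · simpa [smul_smul, hs.ne'] using hC s hs _ h
    · rw [inv_mul_le_iff₀ hs, mul_one]
  rw [h, Measure.addHaar_smul]
  simp [abs_of_pos hs]

lemma map_pow_gauge (hgm : Measurable g) (hg : ∀ c : ℝ, 0 < c → ∀ x, g (c • x) = c * g x)
    (hpos : ∀ x, x ≠ 0 → 0 < g x) (hCm : MeasurableSet C)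
    (hC : ∀ c : ℝ, 0 < c → ∀ x ∈ C, c • x ∈ C) (hfin : volume (C ∩ {x | g x ≤ 1}) ≠ ∞) :
    (volume.restrict C).map (fun x => g x ^ (d + 1)) =
      volume (C ∩ {x | g x ≤ 1}) • volume.restrict (Ioi 0) := by
  set v := volume (C ∩ {x | g x ≤ 1}) with hv
  have hgpm : Measurable fun x => g x ^ (d + 1) := hgm.pow_const _
  have h0 : g 0 = 0 := by
    have := hg 2 two_pos 0
    rw [smul_zero] at this
    linarith
  have hnn : ∀ x, 0 ≤ g x := fun x => by
    by_cases hx : x = 0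
    · rw [hx, h0]
    · exact (hpos x hx).le
  have hIoc : ∀ a b : ℝ, 0 ≤ a → a < b →
      volume (C ∩ {x | a < g x ^ (d + 1) ∧ g x ^ (d + 1) ≤ b}) = v * ENNReal.ofReal (b - a) := by
    have hle : ∀ b : ℝ, 0 ≤ b →
        volume (C ∩ {x | g x ^ (d + 1) ≤ b}) = ENNReal.ofReal b * v := by
      intro b hb
      rcases hb.eq_or_lt with rfl | hb
      · rw [ENNReal.ofReal_zero, zero_mul]
        refine measure_mono_null (t := {0}) ?_ (measure_singleton 0)
        rintro x ⟨-, hx⟩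
        by_contra hne
        exact absurd hx (not_le.2 (pow_pos (hpos x hne) _))
      · obtain ⟨s, hs, rfl⟩ : ∃ s : ℝ, 0 < s ∧ s ^ (d + 1) = b :=
          ⟨b ^ ((d + 1 : ℕ) : ℝ)⁻¹, Real.rpow_pos_of_pos hb _,
            Real.rpow_inv_natCast_pow hb.le (Nat.succ_ne_zero d)⟩
        rw [← volume_cone_inter_le hg hC hs]
        congr 2
        ext x
        exact pow_le_pow_iff_left₀ (hnn x) hs.le (Nat.succ_ne_zero d)
    intro a b ha hab
    have hsub : C ∩ {x | a < g x ^ (d + 1) ∧ g x ^ (d + 1) ≤ b} =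
        (C ∩ {x | g x ^ (d + 1) ≤ b}) \ (C ∩ {x | g x ^ (d + 1) ≤ a}) := by
      ext x
      simp only [mem_inter_iff, mem_ofPred_eq, mem_sdiff, not_and, not_le]
      tauto
    rw [hsub, measure_sdiff, hle b (ha.trans hab.le), hle a ha, ENNReal.ofReal_sub _ ha,
      ENNReal.mul_sub, mul_comm v, mul_comm v]
    · exact fun _ _ => hfin
    · exact inter_subset_inter_right _ fun x hx => le_trans hx hab.le
    · exact (hCm.inter (hgpm measurableSet_Iic)).nullMeasurableSet
    · rw [hle a ha]
      exact ENNReal.mul_ne_top ENNReal.ofReal_ne_top hfin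
  symm
  refine Measure.ext_of_Ioc' _ _ ?_ ?_
  · intro a b hab
    rw [Measure.smul_apply, smul_eq_mul]
    exact ENNReal.mul_ne_top hfin ((Measure.restrict_apply_le _ _).trans_lt
      measure_Ioc_lt_top).ne
  · intro a b hab
    rw [Measure.smul_apply, smul_eq_mul, Measure.map_apply hgpm measurableSet_Ioc,
      Measure.restrict_apply measurableSet_Ioc, Measure.restrict_apply (hgpm measurableSet_Ioc)]
    rcases le_or_gt 0 a with ha | ha
    · have h1 : Ioc a b ∩ Ioi 0 = Ioc a b := inter_eq_left.2 fun x hx => ha.trans_lt hx.1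
      rw [h1, Real.volume_Ioc, ← hIoc a b ha hab, inter_comm]
      rfl
    · rcases le_or_gt b 0 with hb | hb
      · have h1 : Ioc a b ∩ Ioi 0 = ∅ := by
          ext x; simp only [mem_inter_iff, mem_Ioc, mem_Ioi, mem_empty_iff_false]; grind
        rw [h1, measure_empty, mul_zero]
        symm
        refine measure_mono_null (t := {0}) ?_ (measure_singleton 0)
        rintro x ⟨hx, -⟩
        by_contra hne
        exact absurd (hx.2.trans hb) (not_le.2 (pow_pos (hpos x hne) _))
      · have h1 : Ioc a b ∩ Ioi 0 = Ioc 0 b := by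
          ext x; simp only [mem_inter_iff, mem_Ioc, mem_Ioi]; grind
        rw [h1, Real.volume_Ioc, ← hIoc 0 b le_rfl hb]
        apply measure_congr
        have hae : ∀ᵐ x : Euc (d + 1), x ≠ 0 := by
          simp [ae_iff]
        filter_upwards [hae] with x hx
        refine propext ?_
        have := pow_pos (hpos x hx) (d + 1)
        change (x ∈ C ∧ 0 < g x ^ (d + 1) ∧ g x ^ (d + 1) ≤ b) ↔
          ((a < g x ^ (d + 1) ∧ g x ^ (d + 1) ≤ b) ∧ x ∈ C)
        grind

/-- The radial integral of `φ` against the volume element `d(t ^ (d + 1))`. -/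
def radialMass (d : ℕ) (φ : ℝ → ℝ≥0∞) : ℝ≥0∞ :=
  ∫⁻ t in Ioi (0 : ℝ), φ (t ^ (((d + 1 : ℕ) : ℝ)⁻¹))

lemma lintegral_cone_gauge (hgm : Measurable g)
    (hg : ∀ c : ℝ, 0 < c → ∀ x, g (c • x) = c * g x)
    (hpos : ∀ x, x ≠ 0 → 0 < g x) (hCm : MeasurableSet C)
    (hC : ∀ c : ℝ, 0 < c → ∀ x ∈ C, c • x ∈ C) (hfin : volume (C ∩ {x | g x ≤ 1}) ≠ ∞)
    {φ : ℝ → ℝ≥0∞} (hφ : Measurable φ) :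
    ∫⁻ x in C, φ (g x) = radialMass d φ * volume (C ∩ {x | g x ≤ 1}) := by
  have hm : Measurable fun t : ℝ => φ (t ^ (((d + 1 : ℕ) : ℝ)⁻¹)) :=
    hφ.comp (measurable_id.pow_const _)
  have h := lintegral_map (μ := volume.restrict C) hm (hgm.pow_const (d + 1))
  rw [map_pow_gauge hgm hg hpos hCm hC hfin, lintegral_smul_measure, smul_eq_mul] at h
  rw [radialMass, mul_comm, h]
  have hae : ∀ᵐ x ∂(volume.restrict C), x ≠ 0 :=
    ae_restrict_of_ae (by simp [ae_iff])
  refine lintegral_congr_ae ?_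
  filter_upwards [hae] with x hx
  rw [Real.pow_rpow_inv_natCast (hpos x hx).le (Nat.succ_ne_zero d)]

lemma integrable_norm_pow_mul_exp (k : ℕ) {c : ℝ} (hc : 0 < c) :
    Integrable fun x : Euc (d + 1) => ‖x‖ ^ k * Real.exp (-(c * ‖x‖)) := by
  have hlim : Filter.Tendsto (fun r : ℝ => (1 + r) ^ (d + 2) * (r ^ k * Real.exp (-(c * r))))
      Filter.atTop (𝓝 0) := by
    have h1 : ∀ n : ℕ, Filter.Tendsto (fun r : ℝ => r ^ n * Real.exp (-(c * r)))
        Filter.atTop (𝓝 0) := by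
      intro n
      have := tendsto_rpow_mul_exp_neg_mul_atTop_nhds_zero n c hc
      refine this.congr fun r => ?_
      rw [Real.rpow_natCast, neg_mul]
    have h2 : (fun r : ℝ => (1 + r) ^ (d + 2) * (r ^ k * Real.exp (-(c * r)))) =
        fun r => ∑ j ∈ Finset.range (d + 2 + 1),
          ((d + 2).choose j : ℝ) * (r ^ (j + k) * Real.exp (-(c * r))) := by
      ext r
      rw [add_comm, add_pow, Finset.sum_mul]
      refine Finset.sum_congr rfl fun j _ => ?_
      rw [one_pow, pow_add]; ring
    rw [h2, show (0 : ℝ) = ∑ j ∈ Finset.range (d + 2 + 1), ((d + 2).choose j : ℝ) * 0 by simp]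
    exact tendsto_finsetSum _ fun j _ => (h1 (j + k)).const_mul _
  obtain ⟨B, hB⟩ : ∃ B : ℝ, ∀ r ∈ Ici (0 : ℝ),
      (1 + r) ^ (d + 2) * (r ^ k * Real.exp (-(c * r))) ≤ B := by
    obtain ⟨r₀, hr₀⟩ := Filter.eventually_atTop.1 (hlim.eventually (gt_mem_nhds zero_lt_one))
    have hcont : Continuous fun r : ℝ => (1 + r) ^ (d + 2) * (r ^ k * Real.exp (-(c * r))) := by
      fun_prop
    obtain ⟨B, hB⟩ := (isCompact_Icc (a := (0 : ℝ)) (b := r₀)).bddAbove_image hcont.continuousOn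
    refine ⟨max B 1, fun r hr => ?_⟩
    rcases le_total r r₀ with h | h
    · exact le_max_of_le_left (hB (mem_image_of_mem _ ⟨hr, h⟩))
    · exact le_max_of_le_right (hr₀ r h).le
  have hdecay : Integrable fun x : Euc (d + 1) => B * (1 + ‖x‖) ^ (-((d + 2 : ℕ) : ℝ)) :=
    (integrable_one_add_norm (by
      rw [finrank_euclideanSpace, Fintype.card_fin]; push_cast; linarith)).const_mul B
  refine hdecay.mono' (by fun_prop) (Filter.Eventually.of_forall fun x => ?_)
  have hx : 0 < 1 + ‖x‖ := by positivity
  rw [Real.norm_of_nonneg (by positivity), Real.rpow_neg hx.le, Real.rpow_natCast,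
    ← div_eq_mul_inv, le_div_iff₀ (by positivity), mul_comm]
  exact hB _ (norm_nonneg x)

lemma volume_gauge_le_ne_top {c : ℝ} (hc : 0 < c) (hpos : ∀ x, c * ‖x‖ ≤ g x)
    (C : Set (Euc (d + 1))) : volume (C ∩ {x | g x ≤ 1}) ≠ ∞ := by
  refine ((measure_mono (t := Metric.closedBall 0 c⁻¹) ?_).trans_lt
    measure_closedBall_lt_top).ne
  rintro x ⟨-, hx⟩
  rw [mem_closedBall_zero_iff, ← one_div, le_div_iff₀ hc, mul_comm]
  exact (hpos x).trans hx

lemma radialMass_ne_top (d k : ℕ) :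
    radialMass d (fun t => ENNReal.ofReal (t ^ k * Real.exp (-t))) ≠ ∞ := by
  have h := lintegral_cone_gauge (d := d) (g := fun x => ‖x‖) (C := univ) measurable_norm
    (fun c hc x => by rw [norm_smul, Real.norm_of_nonneg hc.le])
    (fun x hx => norm_pos_iff.2 hx) MeasurableSet.univ (fun _ _ _ _ => mem_univ _)
    (volume_gauge_le_ne_top one_pos (fun x => by simp) _)
    (φ := fun t => ENNReal.ofReal (t ^ k * Real.exp (-t)))
    (by fun_prop)
  have hi := (integrable_norm_pow_mul_exp (d := d) k one_pos).lintegral_lt_top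
  simp only [one_mul] at hi
  rw [Measure.restrict_univ] at h
  rw [h] at hi
  intro htop
  rw [htop, ENNReal.top_mul] at hi
  · exact lt_irrefl _ hi
  · have : (univ ∩ {x : Euc (d + 1) | ‖x‖ ≤ 1}) = Metric.closedBall 0 1 := by
      ext x; simp
    rw [this]
    exact (Metric.measure_closedBall_pos volume _ one_pos).ne'

lemma radialMass_ne_zero (d k : ℕ) :
    radialMass d (fun t => ENNReal.ofReal (t ^ k * Real.exp (-t))) ≠ 0 := by
  rw [radialMass, Ne, lintegral_eq_zero_iff
    (by fun_prop)]
  intro h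
  have h2 := (ae_restrict_iff' measurableSet_Ioi).1 h
  have h3 : volume (Ioi (0 : ℝ)) = 0 := by
    refine measure_mono_null (fun t ht => ?_) h2
    simp only [mem_compl_iff, mem_ofPred_eq, Classical.not_imp]
    refine ⟨ht, ?_⟩
    have : 0 < t ^ (((d + 1 : ℕ) : ℝ)⁻¹) := Real.rpow_pos_of_pos ht _
    simp only [Pi.zero_apply, ENNReal.ofReal_eq_zero, not_le]
    positivity
  simp at h3

end Radial

section Flat

/-- If distances between points `α p` are controlled by distances between points `β p`, then so are
the Hausdorff measures of the images. -/
lemma hausdorffMeasure_image_le_of_dist_le {ι X Y : Type*} [MetricSpace X] [MeasurableSpace X]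
    [BorelSpace X] [MetricSpace Y] [MeasurableSpace Y] [BorelSpace Y] (T : Set ι) (α : ι → X)
    (β : ι → Y) (K : NNReal) (h : ∀ p ∈ T, ∀ p' ∈ T, dist (α p) (α p') ≤ K * dist (β p) (β p'))
    {s : ℝ} (hs : 0 ≤ s) : μH[s] (α '' T) ≤ (K : ℝ≥0∞) ^ s * μH[s] (β '' T) := by
  classical
  rcases T.eq_empty_or_nonempty with rfl | ⟨p₀, hp₀⟩
  · simp
  have : Nonempty ι := ⟨p₀⟩
  have hinv : ∀ p ∈ T, Function.invFunOn β T (β p) ∈ T ∧ β (Function.invFunOn β T (β p)) = β p :=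
    fun p hp => ⟨Function.invFunOn_mem ⟨p, hp, rfl⟩, Function.invFunOn_eq ⟨p, hp, rfl⟩⟩
  have hlip : LipschitzOnWith K (fun y => α (Function.invFunOn β T y)) (β '' T) := by
    refine LipschitzOnWith.of_dist_le_mul ?_
    rintro _ ⟨p, hp, rfl⟩ _ ⟨p', hp', rfl⟩
    have := h _ (hinv p hp).1 _ (hinv p' hp').1
    rwa [(hinv p hp).2, (hinv p' hp').2] at this
  refine le_trans (measure_mono ?_) (hlip.hausdorffMeasure_image_le hs)
  rintro _ ⟨p, hp, rfl⟩
  refine ⟨β p, mem_image_of_mem _ hp, ?_⟩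
  have := h _ (hinv p hp).1 p hp
  rw [(hinv p hp).2, dist_self, mul_zero] at this
  exact dist_le_zero.1 this

lemma exists_hausdorffMeasure_eq_mul_volume (n : ℕ) :
    ∃ κ : ℝ≥0∞, κ ≠ 0 ∧ κ ≠ ∞ ∧ ∀ s : Set (Euc n), μH[(n : ℝ)] s = κ * volume s := by
  have : (μH[(n : ℝ)] : Measure (Euc n)).IsAddHaarMeasure := by
    have := isAddHaarMeasure_hausdorffMeasure (E := Euc n)
    rwa [finrank_euclideanSpace, Fintype.card_fin] at this
  refine ⟨Measure.addHaarScalarFactor (μH[(n : ℝ)] : Measure (Euc n)) volume, ?_,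
    ENNReal.coe_ne_top, fun s => ?_⟩
  · exact ENNReal.coe_ne_zero.2 (Measure.addHaarScalarFactor_pos_of_isAddHaarMeasure _ _).ne'
  · conv_lhs => rw [Measure.isAddLeftInvariant_eq_smul (μH[(n : ℝ)] : Measure (Euc n)) volume]
    rfl

lemma volume_image_le_of_dist_le {ι : Type*} {n : ℕ} (T : Set ι) (α β : ι → Euc n)
    (K : NNReal) (h : ∀ p ∈ T, ∀ p' ∈ T, dist (α p) (α p') ≤ K * dist (β p) (β p')) :
    volume (α '' T) ≤ (K : ℝ≥0∞) ^ n * volume (β '' T) := by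
  obtain ⟨κ, h0, htop, hκ⟩ := exists_hausdorffMeasure_eq_mul_volume n
  have := hausdorffMeasure_image_le_of_dist_le T α β K h (s := n) (Nat.cast_nonneg n)
  rw [hκ, hκ, ENNReal.rpow_natCast, mul_left_comm] at this
  exact (ENNReal.mul_le_mul_iff_right h0 htop).1 this

/-- Orthogonal coordinates along a unit vector, with the volume of slanted prisms. -/
lemma exists_projection_volume_prism {d : ℕ} {u : Euc (d + 1)} (hu : ‖u‖ = 1) :
    ∃ P : Euc (d + 1) → Euc d,
      (∀ x y, ‖P x - P y‖ ^ 2 + ⟪x - y, u⟫ ^ 2 = ‖x - y‖ ^ 2) ∧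
      ∀ (x₀ : Euc (d + 1)) (X : Set (Euc (d + 1))) (η : ℝ), 0 < ⟪x₀, u⟫ →
        volume ((fun p : Euc (d + 1) × ℝ => p.1 - ⟪p.1, u⟫ • u + p.2 • x₀) ''
          (X ×ˢ Ioc 1 (1 + η))) = ENNReal.ofReal (⟪x₀, u⟫ * η) * volume (P '' X) := by
  have horth : Orthonormal ℝ ((({0} : Set (Fin (d + 1)))).domRestrict
      (fun _ : Fin (d + 1) => u)) := by
    constructor
    · intro i; exact hu
    · intro i j hij
      exact absurd (Subsingleton.elim i j) hij
  obtain ⟨b, hb⟩ := horth.exists_orthonormalBasis_extension_of_card_eq (by simp)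
  have hb0 : b 0 = u := hb 0 rfl
  have hr0 : ∀ x, b.repr x 0 = ⟪x, u⟫ := fun x => by
    rw [b.repr_apply_apply, hb0, real_inner_comm]
  have hru : ∀ i : Fin d, b.repr u i.succ = 0 := fun i => by
    rw [← hb0, b.repr_self]; simp
  let P0 : Euc (d + 1) → (Fin d → ℝ) := fun x i => b.repr x i.succ
  have hP0c : Continuous P0 := by
    refine continuous_pi fun i => ?_
    exact (EuclideanSpace.proj (𝕜 := ℝ) i.succ).continuous.comp b.repr.continuous
  refine ⟨fun x => WithLp.toLp 2 (P0 x), fun x y => ?_, fun x₀ X η ha => ?_⟩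
  · rw [← b.repr.norm_map (x - y), EuclideanSpace.real_norm_sq_eq, EuclideanSpace.real_norm_sq_eq,
      Fin.sum_univ_succ, hr0, add_comm]
    simp [P0]
  · set a := ⟪x₀, u⟫ with hadef
    have hPimage : volume ((fun x => WithLp.toLp 2 (P0 x)) '' X) = volume (P0 '' X) := by
      have h := (PiLp.volume_preserving_toLp (Fin d)).measure_preimage_emb
        (MeasurableEquiv.toLp 2 (Fin d → ℝ)).measurableEmbedding
        ((fun x => WithLp.toLp 2 (P0 x)) '' X)
      rw [← h]
      congr 1
      ext w
      constructor
      · rintro ⟨x, hx, e⟩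
        exact ⟨x, hx, (WithLp.toLp_injective 2 e)⟩
      · rintro ⟨x, hx, rfl⟩
        exact ⟨x, hx, rfl⟩
    have he : MeasurePreserving (fun x : Euc (d + 1) => ((b.repr x 0, P0 x) : ℝ × (Fin d → ℝ)))
        volume volume := by
      have h := (volume_preserving_piFinSuccAbove (fun _ : Fin (d + 1) => ℝ) 0).comp
        ((PiLp.volume_preserving_ofLp (Fin (d + 1))).comp b.measurePreserving_repr)
      convert! h using 1
    have hshear : MeasurePreserving
        (fun p : ℝ × (Fin d → ℝ) => (p.1, p.2 - (p.1 / a) • P0 x₀))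
        ((volume : Measure ℝ).prod (volume : Measure (Fin d → ℝ)))
        ((volume : Measure ℝ).prod (volume : Measure (Fin d → ℝ))) := by
      refine (MeasurePreserving.id volume).skew_product
        (g := fun τ w => w - (τ / a) • P0 x₀) ?_ ?_
      · exact Continuous.measurable (by fun_prop)
      · exact Filter.Eventually.of_forall fun τ =>
          (measurePreserving_sub_right volume ((τ / a) • P0 x₀)).map_eq
    have hF := hshear.comp he
    have hinj : Function.Injective ((fun p : ℝ × (Fin d → ℝ) => (p.1, p.2 - (p.1 / a) • P0 x₀)) ∘
        fun x : Euc (d + 1) => ((b.repr x 0, P0 x) : ℝ × (Fin d → ℝ))) := by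
      intro x y hxy
      simp only [Function.comp_apply, Prod.mk.injEq] at hxy
      obtain ⟨h0, h1⟩ := hxy
      rw [h0, sub_left_inj] at h1
      apply b.repr.injective
      ext i
      refine Fin.cases h0 (fun j => ?_) i
      exact congrFun h1 j
    have hcont : Continuous ((fun p : ℝ × (Fin d → ℝ) => (p.1, p.2 - (p.1 / a) • P0 x₀)) ∘
        fun x : Euc (d + 1) => ((b.repr x 0, P0 x) : ℝ × (Fin d → ℝ))) := by
      refine Continuous.comp (by fun_prop) ?_
      exact ((EuclideanSpace.proj (𝕜 := ℝ) 0).continuous.comp b.repr.continuous).prodMk hP0c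
    have hemb := hcont.measurableEmbedding hinj
    have hvol := hF.measure_preimage_emb hemb (Ioc a (a * (1 + η)) ×ˢ (P0 '' X))
    rw [Measure.prod_prod, Real.volume_Ioc] at hvol
    rw [hPimage, show a * η = a * (1 + η) - a by ring, ← hvol]
    congr 1
    have hcoord : ∀ (x : Euc (d + 1)) (s : ℝ),
        b.repr (x - ⟪x, u⟫ • u + s • x₀) 0 = a * s ∧
          P0 (x - ⟪x, u⟫ • u + s • x₀) = P0 x + s • P0 x₀ := by
      intro x s
      constructor
      · rw [hr0, inner_add_left, inner_sub_left, real_inner_smul_left, real_inner_smul_left,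
          real_inner_self_eq_norm_sq, hu]
        ring
      · ext i
        simp [P0, hru]
    have hdiv : ∀ s : ℝ, a * s / a = s := fun s => by field_simp
    ext z
    constructor
    · rintro ⟨⟨x, s⟩, ⟨hx, hs⟩, rfl⟩
      obtain ⟨h0, h1⟩ := hcoord x s
      refine ⟨?_, x, hx, ?_⟩
      · change b.repr (x - ⟪x, u⟫ • u + s • x₀) 0 ∈ _
        rw [h0]
        exact ⟨by nlinarith [hs.1], by nlinarith [hs.2]⟩
      · change P0 x = P0 (x - ⟪x, u⟫ • u + s • x₀) -
          (b.repr (x - ⟪x, u⟫ • u + s • x₀) 0 / a) • P0 x₀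
        rw [h0, h1, hdiv, add_sub_cancel_right]
    · rintro ⟨h0, x, hx, h1⟩
      change b.repr z 0 ∈ _ at h0
      change P0 x = P0 z - (b.repr z 0 / a) • P0 x₀ at h1
      refine ⟨(x, b.repr z 0 / a), ⟨hx, ?_, ?_⟩, ?_⟩
      · rw [lt_div_iff₀ ha]; linarith [h0.1]
      · rw [div_le_iff₀ ha]; linarith [h0.2]
      · obtain ⟨e0, e1⟩ := hcoord x (b.repr z 0 / a)
        apply b.repr.injective
        ext i
        refine Fin.cases ?_ (fun j => ?_) i
        · rw [e0]; field_simp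
        · have := congrFun e1 j
          rw [h1, sub_add_cancel] at this
          exact this

end Flat

section Local

/-- For a nearly flat set `X` near `x₀` with normal close to `u`, the volume of the thin shell
`(1, 1 + η] • X` is comparable with `⟪x₀, u⟫ η` times the Hausdorff measure of `X`. -/
lemma exists_shell_comparison (d : ℕ) {κ : ℝ≥0∞}
    (hκ : ∀ s : Set (Euc d), μH[(d : ℝ)] s = κ * volume s) {K : NNReal} (hK : 1 < K)
    {r R : ℝ} (hr : 0 < r) (hR : 0 < R) :
    ∃ δ : ℝ, 0 < δ ∧ ∀ (u x₀ : Euc (d + 1)) (X : Set (Euc (d + 1))) (η : ℝ),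
      ‖u‖ = 1 → ‖x₀‖ ≤ R → r ≤ ⟪x₀, u⟫ → (∀ x ∈ X, ‖x - x₀‖ ≤ δ) →
      (∀ x ∈ X, ∀ x' ∈ X, |⟪x - x', u⟫| ≤ δ * ‖x - x'‖) → 0 < η → η ≤ δ →
      κ * volume ((fun p : Euc (d + 1) × ℝ => p.2 • p.1) '' (X ×ˢ Ioc 1 (1 + η))) ≤
        K ^ (2 * d + 1) * (ENNReal.ofReal (⟪x₀, u⟫ * η) * μH[(d : ℝ)] X) ∧
      ENNReal.ofReal (⟪x₀, u⟫ * η) * μH[(d : ℝ)] X ≤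
        K ^ (2 * d + 1) *
          (κ * volume ((fun p : Euc (d + 1) × ℝ => p.2 • p.1) '' (X ×ˢ Ioc 1 (1 + η)))) := by
  have hK1 : (1 : ℝ) < K := by exact_mod_cast hK
  have hK0 : (0 : ℝ) < K := one_pos.trans hK1
  set θ : ℝ := 1 - (K : ℝ)⁻¹ with hθ
  have hθ0 : 0 < θ := sub_pos.2 (inv_lt_one_of_one_lt₀ hK1)
  have hKθ : (K : ℝ) * (1 - θ) = 1 := by rw [hθ]; field_simp; ring
  have hθK : 1 + θ ≤ K := by nlinarith
  set B : ℝ := 4 * (1 + R / r) + 1 / r with hB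
  have hB0 : 0 < B := by positivity
  refine ⟨min (1 / 2) (min θ (θ / B)), by positivity, ?_⟩
  intro u x₀ X η hu hx₀ ha hX hflat hη hηδ
  set δ : ℝ := min (1 / 2) (min θ (θ / B)) with hδ
  have hδ0 : 0 < δ := by positivity
  have hδ2 : δ ≤ 1 / 2 := min_le_left _ _
  have hδθ : δ ≤ θ := (min_le_right _ _).trans (min_le_left _ _)
  have hδB : δ * B ≤ θ := by
    rw [← le_div_iff₀ hB0]
    exact (min_le_right _ _).trans (min_le_right _ _)
  obtain ⟨P, hP, hprism⟩ := exists_projection_volume_prism hu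
  have ha0 : 0 < ⟪x₀, u⟫ := hr.trans_le ha
  have hPle : ∀ x y, ‖P x - P y‖ ≤ ‖x - y‖ := fun x y => by
    refine le_of_sq_le_sq ?_ (norm_nonneg _)
    nlinarith [hP x y, sq_nonneg ⟪x - y, u⟫]
  have hleP : ∀ x ∈ X, ∀ y ∈ X, ‖x - y‖ ≤ K * ‖P x - P y‖ := fun x hx y hy => by
    have h1 : ‖x - y‖ ≤ ‖P x - P y‖ + |⟪x - y, u⟫| := by
      refine le_of_sq_le_sq ?_ (by positivity)
      nlinarith [hP x y, sq_abs ⟪x - y, u⟫, norm_nonneg (P x - P y), abs_nonneg ⟪x - y, u⟫,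
        mul_nonneg (norm_nonneg (P x - P y)) (abs_nonneg ⟪x - y, u⟫)]
    have h2 := hflat x hx y hy
    have h3 : (1 - θ) * ‖x - y‖ ≤ ‖P x - P y‖ := by nlinarith [norm_nonneg (x - y)]
    calc ‖x - y‖ = K * ((1 - θ) * ‖x - y‖) := by rw [← mul_assoc, hKθ, one_mul]
      _ ≤ K * ‖P x - P y‖ := by gcongr
  set T : Set (Euc (d + 1) × ℝ) := X ×ˢ Ioc 1 (1 + η) with hT
  set α : Euc (d + 1) × ℝ → Euc (d + 1) := fun p => p.2 • p.1 with hα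
  set β : Euc (d + 1) × ℝ → Euc (d + 1) := fun p => p.1 - ⟪p.1, u⟫ • u + p.2 • x₀ with hβ
  have hkey : ∀ p ∈ T, ∀ p' ∈ T, ‖(α p - α p') - (β p - β p')‖ ≤ θ * ‖β p - β p'‖ := by
    rintro ⟨x, s⟩ ⟨hx, hs⟩ ⟨x', s'⟩ ⟨hx', hs'⟩
    simp only at hx hs hx' hs'
    set w := (x - x') - ⟪x - x', u⟫ • u with hw
    have hD : β (x, s) - β (x', s') = w + (s - s') • x₀ := by
      simp only [hβ, hw, inner_sub_left]; module
    set D := β (x, s) - β (x', s') with hDdef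
    have hs1 : |s - s'| * r ≤ ‖D‖ := by
      have h1 : ⟪D, u⟫ = (s - s') * ⟪x₀, u⟫ := by
        rw [hD, hw, inner_add_left, inner_sub_left, real_inner_smul_left, real_inner_smul_left,
          real_inner_self_eq_norm_sq, hu]
        ring
      have h2 := abs_real_inner_le_norm D u
      rw [hu, mul_one, h1, abs_mul, abs_of_pos ha0] at h2
      exact (mul_le_mul_of_nonneg_left ha (abs_nonneg _)).trans h2
    have hs2 : |s - s'| ≤ ‖D‖ / r := by rwa [le_div_iff₀ hr]
    have hw1 : ‖w‖ ≤ (1 + R / r) * ‖D‖ := by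
      have : w = D - (s - s') • x₀ := by rw [hD]; abel
      calc ‖w‖ ≤ ‖D‖ + ‖(s - s') • x₀‖ := by rw [this]; exact norm_sub_le _ _
        _ ≤ ‖D‖ + (‖D‖ / r) * R := by
            rw [norm_smul, Real.norm_eq_abs]; gcongr
        _ = (1 + R / r) * ‖D‖ := by field_simp
    have hx1 : ‖x - x'‖ ≤ 2 * ‖w‖ := by
      have h1 : ‖x - x'‖ ≤ ‖w‖ + |⟪x - x', u⟫| := by
        calc ‖x - x'‖ = ‖w + ⟪x - x', u⟫ • u‖ := by rw [hw, sub_add_cancel]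
          _ ≤ ‖w‖ + ‖⟪x - x', u⟫ • u‖ := norm_add_le _ _
          _ = ‖w‖ + |⟪x - x', u⟫| := by rw [norm_smul, hu, mul_one, Real.norm_eq_abs]
      have h2 := hflat x hx x' hx'
      nlinarith [norm_nonneg (x - x')]
    have hdiff : (α (x, s) - α (x', s')) - D =
        (s - 1) • (x - x') + ⟪x - x', u⟫ • u + (s - s') • (x' - x₀) := by
      rw [hD, hw]; simp only [hα]; module
    have hs3 : |s - 1| ≤ δ := by
      rw [abs_of_nonneg (by linarith [hs.1])]; linarith [hs.2]
    calc ‖(α (x, s) - α (x', s')) - D‖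
        ≤ ‖(s - 1) • (x - x')‖ + ‖⟪x - x', u⟫ • u‖ + ‖(s - s') • (x' - x₀)‖ := by
          rw [hdiff]; exact norm_add₃_le
      _ ≤ δ * ‖x - x'‖ + δ * ‖x - x'‖ + (‖D‖ / r) * δ := by
          rw [norm_smul, norm_smul, norm_smul, hu, mul_one]
          simp only [Real.norm_eq_abs]
          gcongr
          · exact hflat x hx x' hx'
          · exact hX x' hx'
      _ ≤ δ * (2 * ((1 + R / r) * ‖D‖)) + δ * (2 * ((1 + R / r) * ‖D‖)) + (‖D‖ / r) * δ := by
          have : ‖x - x'‖ ≤ 2 * ((1 + R / r) * ‖D‖) := hx1.trans (by gcongr)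
          gcongr
      _ = (δ * B) * ‖D‖ := by rw [hB]; ring
      _ ≤ θ * ‖D‖ := by gcongr
  have hαβ : ∀ p ∈ T, ∀ p' ∈ T, dist (α p) (α p') ≤ K * dist (β p) (β p') := by
    intro p hp p' hp'
    rw [dist_eq_norm, dist_eq_norm]
    have h1 := hkey p hp p' hp'
    have h2 : ‖α p - α p'‖ ≤ ‖(α p - α p') - (β p - β p')‖ + ‖β p - β p'‖ := by
      simpa using norm_add_le ((α p - α p') - (β p - β p')) (β p - β p')
    nlinarith [norm_nonneg (β p - β p')]
  have hβα : ∀ p ∈ T, ∀ p' ∈ T, dist (β p) (β p') ≤ K * dist (α p) (α p') := by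
    intro p hp p' hp'
    rw [dist_eq_norm, dist_eq_norm]
    have h1 := hkey p hp p' hp'
    have h2 : ‖β p - β p'‖ ≤ ‖(α p - α p') - (β p - β p')‖ + ‖α p - α p'‖ := by
      have := norm_sub_le (α p - α p') ((α p - α p') - (β p - β p'))
      rw [sub_sub_cancel] at this
      linarith
    have h3 : (1 - θ) * ‖β p - β p'‖ ≤ ‖α p - α p'‖ := by linarith
    calc ‖β p - β p'‖ = K * ((1 - θ) * ‖β p - β p'‖) := by rw [← mul_assoc, hKθ, one_mul]
      _ ≤ K * ‖α p - α p'‖ := by gcongr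
  have v1 := volume_image_le_of_dist_le T α β K hαβ
  have v2 := volume_image_le_of_dist_le T β α K hβα
  rw [hprism x₀ X η ha0] at v1 v2
  have w1 : κ * volume (P '' X) ≤ (K : ℝ≥0∞) ^ d * μH[(d : ℝ)] X := by
    have := hausdorffMeasure_image_le_of_dist_le X P id K
      (fun x _ y _ => by
        rw [dist_eq_norm, id, id, dist_eq_norm]
        nlinarith [hPle x y, norm_nonneg (x - y)]) (s := d) (Nat.cast_nonneg d)
    rwa [hκ, image_id, ENNReal.rpow_natCast] at this
  have w2 : μH[(d : ℝ)] X ≤ (K : ℝ≥0∞) ^ d * (κ * volume (P '' X)) := by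
    have := hausdorffMeasure_image_le_of_dist_le X id P K
      (fun x hx y hy => by
        rw [dist_eq_norm, id, id, dist_eq_norm]
        exact hleP x hx y hy) (s := d) (Nat.cast_nonneg d)
    rwa [hκ, image_id, ENNReal.rpow_natCast] at this
  constructor
  · calc κ * volume (α '' T)
        ≤ κ * ((K : ℝ≥0∞) ^ (d + 1) * (ENNReal.ofReal (⟪x₀, u⟫ * η) * volume (P '' X))) := by
          gcongr
      _ = (K : ℝ≥0∞) ^ (d + 1) * (ENNReal.ofReal (⟪x₀, u⟫ * η) * (κ * volume (P '' X))) := by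
          ring
      _ ≤ (K : ℝ≥0∞) ^ (d + 1) * (ENNReal.ofReal (⟪x₀, u⟫ * η) *
            ((K : ℝ≥0∞) ^ d * μH[(d : ℝ)] X)) := by gcongr
      _ = _ := by ring
  · calc ENNReal.ofReal (⟪x₀, u⟫ * η) * μH[(d : ℝ)] X
        ≤ ENNReal.ofReal (⟪x₀, u⟫ * η) * ((K : ℝ≥0∞) ^ d * (κ * volume (P '' X))) := by gcongr
      _ = (K : ℝ≥0∞) ^ d * (κ * (ENNReal.ofReal (⟪x₀, u⟫ * η) * volume (P '' X))) := by ring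
      _ ≤ (K : ℝ≥0∞) ^ d * (κ * ((K : ℝ≥0∞) ^ (d + 1) * volume (α '' T))) := by gcongr
      _ = _ := by ring

end Local

/-- The support function of a set. -/
def suppFun {m : ℕ} (M : Set (Euc m)) (u : Euc m) : ℝ :=
  sSup ((fun x => ⟪x, u⟫) '' M)

section SuppFun

variable {m : ℕ} {M : Set (Euc m)}

lemma isGreatest_suppFun (hM : IsCompact M) (hne : M.Nonempty) (u : Euc m) :
    IsGreatest ((fun x => ⟪x, u⟫) '' M) (suppFun M u) :=
  (hM.image (by fun_prop)).isGreatest_sSup (hne.image _)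

lemma inner_le_suppFun (hM : IsCompact M) {x : Euc m} (hx : x ∈ M) (u : Euc m) :
    ⟪x, u⟫ ≤ suppFun M u :=
  (isGreatest_suppFun hM ⟨x, hx⟩ u).2 (mem_image_of_mem _ hx)

lemma suppFun_le_iff (hM : IsCompact M) (hne : M.Nonempty) (u : Euc m) (c : ℝ) :
    suppFun M u ≤ c ↔ ∀ x ∈ M, ⟪x, u⟫ ≤ c := by
  constructor
  · exact fun h x hx => (inner_le_suppFun hM hx u).trans h
  · intro h
    obtain ⟨x, hx, e⟩ := (isGreatest_suppFun hM hne u).1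
    exact e ▸ h x hx

lemma suppFun_le_norm (hM : IsCompact M) (hne : M.Nonempty) {R : ℝ}
    (hR : ∀ x ∈ M, ‖x‖ ≤ R) (u : Euc m) : suppFun M u ≤ R * ‖u‖ := by
  rw [suppFun_le_iff hM hne]
  exact fun x hx => (real_inner_le_norm x u).trans
    (mul_le_mul_of_nonneg_right (hR x hx) (norm_nonneg u))

lemma lipschitzWith_suppFun (hM : IsCompact M) (hne : M.Nonempty) {R : NNReal}
    (hR : ∀ x ∈ M, ‖x‖ ≤ R) : LipschitzWith R (suppFun M) := by
  refine LipschitzWith.of_le_add_mul R fun u v => ?_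
  rw [suppFun_le_iff hM hne]
  intro x hx
  have h1 : ⟪x, u⟫ = ⟪x, v⟫ + ⟪x, u - v⟫ := by rw [← inner_add_right]; simp
  rw [h1, dist_eq_norm]
  exact add_le_add (inner_le_suppFun hM hx v) ((real_inner_le_norm _ _).trans
    (mul_le_mul_of_nonneg_right (hR x hx) (norm_nonneg _)))

lemma continuous_suppFun (hM : IsCompact M) (hne : M.Nonempty) : Continuous (suppFun M) := by
  obtain ⟨R, hR⟩ := hM.isBounded.exists_norm_le
  exact (lipschitzWith_suppFun hM hne (R := R.toNNReal)
    fun x hx => (hR x hx).trans (Real.le_coe_toNNReal R)).continuous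

end SuppFun

/-- `q` is a positive continuous function which on the sphere is the reciprocal of the support
function of the convex body `M`, so that `M` is the unit ball of `wulffGauge q`. -/
structure IsInvSupport {d : ℕ} (q : Euc (d + 1) → ℝ) (M : Set (Euc (d + 1))) : Prop where
  continuous : Continuous q
  exists_bounds : ∃ c Q : ℝ, 0 < c ∧ ∀ u, c ≤ q u ∧ q u ≤ Q
  gauge_le_one_iff : ∀ x, wulffGauge q x ≤ 1 ↔ x ∈ M
  isGreatest : ∀ u ∈ unitSphere (d + 1), IsGreatest ((fun x => ⟪x, u⟫) '' M) (q u)⁻¹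

section InvSupport

variable {d : ℕ} {M : Set (Euc (d + 1))}

lemma exists_isInvSupport (hM : Convex ℝ M) (hMc : IsCompact M)
    (h0 : (0 : Euc (d + 1)) ∈ interior M) :
    ∃ q, IsInvSupport q M := by
  have hne : M.Nonempty := ⟨0, interior_subset h0⟩
  obtain ⟨r, hr, hrM⟩ := Metric.nhds_basis_closedBall.mem_iff.1 (mem_interior_iff_mem_nhds.1 h0)
  obtain ⟨R, hR⟩ := hMc.isBounded.exists_norm_le
  have hle : ∀ u ∈ unitSphere (d + 1), r ≤ suppFun M u := by
    intro u hu
    rw [mem_unitSphere] at hu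
    have h := inner_le_suppFun hMc (hrM (show r • u ∈ Metric.closedBall 0 r by
      simp [norm_smul, hu, abs_of_pos hr])) u
    rwa [real_inner_smul_left, real_inner_self_eq_norm_sq, hu, one_pow, mul_one] at h
  have hge : ∀ u ∈ unitSphere (d + 1), suppFun M u ≤ R := by
    intro u hu
    have := suppFun_le_norm hMc hne hR u
    rwa [mem_unitSphere.1 hu, mul_one] at this
  have hrR : r ≤ R := by
    obtain ⟨u, hu⟩ := unitSphere_nonempty d
    exact (hle u hu).trans (hge u hu)
  set p : Euc (d + 1) → ℝ := fun u => min (max (suppFun M u) r) R with hp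
  have hpr : ∀ u, r ≤ p u := fun u => le_min (le_max_right _ _) hrR
  have hpR : ∀ u, p u ≤ R := fun u => min_le_right _ _
  have hpe : ∀ u ∈ unitSphere (d + 1), p u = suppFun M u := by
    intro u hu
    simp [hp, hle u hu, hge u hu]
  have hpc : Continuous p := by
    have := continuous_suppFun hMc hne
    fun_prop
  have hqc : Continuous fun u => (p u)⁻¹ := hpc.inv₀ fun u => (hr.trans_le (hpr u)).ne'
  refine ⟨fun u => (p u)⁻¹, hqc, ⟨R⁻¹, r⁻¹, inv_pos.2 (hr.trans_le hrR), fun u =>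
    ⟨inv_anti₀ (hr.trans_le (hpr u)) (hpR u), inv_anti₀ hr (hpr u)⟩⟩, fun x => ?_, fun u hu => ?_⟩
  · rw [wulffGauge_le_iff hqc]
    have key : ∀ u ∈ unitSphere (d + 1), ⟪x, u⟫ * (p u)⁻¹ ≤ 1 ↔ ⟪x, u⟫ ≤ suppFun M u := by
      intro u hu
      rw [← div_eq_mul_inv, div_le_one (hr.trans_le (hpr u)), hpe u hu]
    constructor
    · intro h
      by_contra hx
      obtain ⟨f, s, hf, hs⟩ := geometric_hahn_banach_closed_point hM hMc.isClosed hx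
      set w := (InnerProductSpace.toDual ℝ (Euc (d + 1))).symm f with hw
      have hfw : ∀ y, f y = ⟪y, w⟫ := fun y => by
        rw [real_inner_comm, hw, InnerProductSpace.toDual_symm_apply]
      have h0' := hf 0 (interior_subset h0)
      rw [map_zero] at h0'
      have hw0 : 0 < ‖w‖ := by
        rw [norm_pos_iff]
        rintro hw0
        rw [hfw, hw0, inner_zero_right] at hs
        linarith
      have hu : ‖w‖⁻¹ • w ∈ unitSphere (d + 1) := by
        rw [mem_unitSphere, norm_smul, norm_inv, norm_norm, inv_mul_cancel₀ hw0.ne']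
      have h1 := (key _ hu).1 (h _ hu)
      obtain ⟨y, hy, e⟩ := (isGreatest_suppFun hMc hne (‖w‖⁻¹ • w)).1
      rw [← e] at h1
      simp only [inner_smul_right] at h1
      rw [← hfw, ← hfw] at h1
      have h2 := le_of_mul_le_mul_left h1 (inv_pos.2 hw0)
      linarith [hf y hy]
    · exact fun hx u hu => (key u hu).2 (inner_le_suppFun hMc hx u)
  · simp only [inv_inv, hpe u hu]
    exact isGreatest_suppFun hMc hne u

namespace IsInvSupport

variable {q : Euc (d + 1) → ℝ}

lemma pos (h : IsInvSupport q M) (u : Euc (d + 1)) : 0 < q u := by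
  obtain ⟨c, Q, hc, hcQ⟩ := h.exists_bounds
  exact hc.trans_le (hcQ u).1

lemma exists_norm_le (h : IsInvSupport q M) : ∃ c, 0 < c ∧ ∀ x, c * ‖x‖ ≤ wulffGauge q x := by
  obtain ⟨c, Q, hc, hcQ⟩ := h.exists_bounds
  exact ⟨c, hc, norm_le_wulffGauge h.continuous fun u => (hcQ u).1⟩

lemma gauge_pos (h : IsInvSupport q M) {x : Euc (d + 1)} (hx : x ≠ 0) : 0 < wulffGauge q x := by
  obtain ⟨c, hc, hcx⟩ := h.exists_norm_le
  exact (mul_pos hc (norm_pos_iff.2 hx)).trans_le (hcx x)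

lemma exists_lipschitzWith (h : IsInvSupport q M) :
    ∃ Q : NNReal, LipschitzWith Q (wulffGauge q) := by
  obtain ⟨c, Q, hc, hcQ⟩ := h.exists_bounds
  refine ⟨Q.toNNReal, lipschitzWith_wulffGauge h.continuous fun u => ?_⟩
  rw [abs_of_pos (h.pos u)]
  exact (hcQ u).2.trans (Real.le_coe_toNNReal Q)

lemma continuous_gauge (h : IsInvSupport q M) : Continuous (wulffGauge q) :=
  h.exists_lipschitzWith.choose_spec.continuous

lemma gauge_homogeneous (h : IsInvSupport q M) (c : ℝ) (hc : 0 < c) (x : Euc (d + 1)) :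
    wulffGauge q (c • x) = c * wulffGauge q x :=
  wulffGauge_smul h.continuous hc.le x

lemma eq_setOf (h : IsInvSupport q M) : M = {x | wulffGauge q x ≤ 1} :=
  Set.ext fun x => (h.gauge_le_one_iff x).symm

lemma ae_differentiableAt (h : IsInvSupport q M) :
    ∀ᵐ x : Euc (d + 1), DifferentiableAt ℝ (wulffGauge q) x :=
  h.exists_lipschitzWith.choose_spec.ae_differentiableAt

lemma gauge_eq_one_of_mem_frontier (h : IsInvSupport q M) {x : Euc (d + 1)}
    (hx : x ∈ frontier M) : wulffGauge q x = 1 := by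
  rw [h.eq_setOf] at hx
  exact frontier_le_subset_eq h.continuous_gauge continuous_const hx

lemma mem_frontier_of_gauge_eq_one (h : IsInvSupport q M) {x : Euc (d + 1)}
    (hx : wulffGauge q x = 1) : x ∈ frontier M := by
  refine ⟨subset_closure ((h.gauge_le_one_iff x).1 hx.le), fun hi => ?_⟩
  have hcont : Filter.Tendsto (fun c : ℝ => c • x) (𝓝[>] 1) (𝓝 x) := by
    have : Filter.Tendsto (fun c : ℝ => c • x) (𝓝 1) (𝓝 ((1 : ℝ) • x)) :=
      Continuous.tendsto (by fun_prop) _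
    rw [one_smul] at this
    exact this.mono_left nhdsWithin_le_nhds
  have h1 := hcont.eventually (isOpen_interior.mem_nhds hi)
  obtain ⟨c, hc1, hc⟩ := (h1.and self_mem_nhdsWithin).exists
  have h2 := (h.gauge_le_one_iff _).2 (interior_subset hc1)
  rw [h.gauge_homogeneous c (zero_lt_one.trans hc), hx, mul_one] at h2
  exact not_lt.2 h2 hc

lemma isOutwardNormalAt_gaussMap (h : IsInvSupport q M) {x : Euc (d + 1)} (hx : x ∈ frontier M) :
    IsOutwardNormalAt M x (gaussMap M x) := by
  have hex : ∃ n, IsOutwardNormalAt M x n := by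
    obtain ⟨u, hu, e⟩ := exists_wulffGauge_eq h.continuous x
    refine ⟨u, hx, mem_unitSphere.1 hu, fun y hy => ?_⟩
    have h1 := (wulffGauge_le_iff h.continuous y 1).1 ((h.gauge_le_one_iff y).2 hy) u hu
    rw [← h.gauge_eq_one_of_mem_frontier hx, e] at h1
    rw [inner_sub_left]
    linarith [le_of_mul_le_mul_right h1 (h.pos u)]
  rw [gaussMap, dif_pos hex]
  exact hex.choose_spec

lemma gaussMap_mem (h : IsInvSupport q M) {x : Euc (d + 1)} (hx : x ∈ frontier M) :
    gaussMap M x ∈ unitSphere (d + 1) :=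
  mem_unitSphere.2 (h.isOutwardNormalAt_gaussMap hx).2.1

lemma inner_gaussMap (h : IsInvSupport q M) {x : Euc (d + 1)} (hx : x ∈ frontier M) :
    ⟪x, gaussMap M x⟫ = (q (gaussMap M x))⁻¹ := by
  have hg : IsGreatest ((fun y => ⟪y, gaussMap M x⟫) '' M) ⟪x, gaussMap M x⟫ := by
    refine ⟨⟨x, (h.gauge_le_one_iff x).1 (h.gauge_eq_one_of_mem_frontier hx).le, rfl⟩, ?_⟩
    rintro _ ⟨y, hy, rfl⟩
    have := (h.isOutwardNormalAt_gaussMap hx).2.2 y hy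
    rw [inner_sub_left] at this
    simpa using this
  exact hg.unique (h.isGreatest _ (h.gaussMap_mem hx))

lemma gaussMap_eq (h : IsInvSupport q M) {x : Euc (d + 1)} (hx : x ∈ frontier M)
    (hd : DifferentiableAt ℝ (wulffGauge q) x) : gaussMap M x = gaugeNormal q x := by
  refine (gaugeNormal_eq h.continuous h.pos hd (h.gaussMap_mem hx) ?_).symm
  rw [h.gauge_eq_one_of_mem_frontier hx, h.inner_gaussMap hx, inv_mul_cancel₀ (h.pos _).ne']

/-- Boundary points with almost parallel normals span an almost horizontal chord. -/
lemma abs_inner_sub_le (h : IsInvSupport q M) {x y u : Euc (d + 1)} {δ : ℝ}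
    (hx : x ∈ frontier M) (hy : y ∈ frontier M) (hxu : ‖gaussMap M x - u‖ ≤ δ)
    (hyu : ‖gaussMap M y - u‖ ≤ δ) : |⟪x - y, u⟫| ≤ δ * ‖x - y‖ := by
  have hM : ∀ z ∈ frontier M, z ∈ M := fun z hz =>
    (h.gauge_le_one_iff z).1 (h.gauge_eq_one_of_mem_frontier hz).le
  have key : ∀ x ∈ frontier M, ∀ y ∈ frontier M, ‖gaussMap M y - u‖ ≤ δ →
      ⟪x - y, u⟫ ≤ δ * ‖x - y‖ := by
    intro x hx y hy hyu
    have h1 := (h.isOutwardNormalAt_gaussMap hy).2.2 x (hM x hx)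
    have h2 : ⟪x - y, u⟫ = ⟪x - y, gaussMap M y⟫ - ⟪x - y, gaussMap M y - u⟫ := by
      rw [inner_sub_right (x - y)]; ring
    have h3 := (abs_le.1 (abs_real_inner_le_norm (x - y) (gaussMap M y - u))).1
    have h4 : ‖x - y‖ * ‖gaussMap M y - u‖ ≤ ‖x - y‖ * δ := by gcongr
    linarith
  rw [abs_le]
  refine ⟨?_, key x hx y hy hyu⟩
  have := key y hy x hx hxu
  rw [← neg_sub x y, inner_neg_left, norm_neg] at this
  linarith

end IsInvSupport

end InvSupport

/-- The cone over a subset `X` of the boundary of the unit ball of the gauge `g`. -/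
def gaugeCone {d : ℕ} (g : Euc (d + 1) → ℝ) (X : Set (Euc (d + 1))) : Set (Euc (d + 1)) :=
  {x | (g x)⁻¹ • x ∈ X}

lemma exists_small_pow_sub_one (d : ℕ) {K δ : ℝ} (hK : 1 < K) (hδ : 0 < δ) :
    ∃ η, 0 < η ∧ η ≤ δ ∧ (d + 1) * η ≤ (1 + η) ^ (d + 1) - 1 ∧
      (1 + η) ^ (d + 1) - 1 ≤ K * ((d + 1) * η) := by
  have hd : HasDerivAt (fun x : ℝ => (1 + x) ^ (d + 1)) (d + 1) 0 := by
    have := ((hasDerivAt_id (0 : ℝ)).const_add 1).fun_pow (d + 1)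
    simpa using this
  have h1 := hd.tendsto_slope_zero_right
  have hlt : ((d : ℝ) + 1) < K * (d + 1) := by
    have : (0 : ℝ) < d + 1 := by positivity
    nlinarith
  have h2 := h1.eventually (Iio_mem_nhds hlt)
  have h3 : ∀ᶠ η : ℝ in 𝓝[>] 0, η ≤ δ :=
    nhdsWithin_le_nhds (Iic_mem_nhds hδ)
  obtain ⟨η, ⟨h4, h5⟩, h6⟩ := ((h2.and h3).and self_mem_nhdsWithin).exists
  have h6 : 0 < η := h6
  refine ⟨η, h6, h5, ?_, ?_⟩
  · have := one_add_mul_le_pow (show (-2 : ℝ) ≤ η by linarith) (d + 1)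
    push_cast at this
    linarith
  · simp only [zero_add, add_zero, one_pow, smul_eq_mul] at h4
    rw [inv_mul_lt_iff₀ h6] at h4
    linarith

namespace IsInvSupport

variable {d : ℕ} {M : Set (Euc (d + 1))} {q : Euc (d + 1) → ℝ}

lemma gauge_zero (h : IsInvSupport q M) : wulffGauge q 0 = 0 := by
  simpa using wulffGauge_smul h.continuous le_rfl (0 : Euc (d + 1))

lemma smul_mem_gaugeCone (h : IsInvSupport q M) (X : Set (Euc (d + 1))) (c : ℝ) (hc : 0 < c)
    (x : Euc (d + 1)) (hx : x ∈ gaugeCone (wulffGauge q) X) :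
    c • x ∈ gaugeCone (wulffGauge q) X := by
  simp only [gaugeCone, mem_ofPred_eq, h.gauge_homogeneous c hc, smul_smul] at hx ⊢
  rwa [mul_inv, mul_right_comm, inv_mul_cancel₀ hc.ne', one_mul]

lemma ne_zero_of_mem_gaugeCone (h : IsInvSupport q M) {X : Set (Euc (d + 1))}
    (hX : X ⊆ frontier M) {x : Euc (d + 1)} (hx : x ∈ gaugeCone (wulffGauge q) X) : x ≠ 0 := by
  rintro rfl
  have := h.gauge_eq_one_of_mem_frontier (hX hx)
  rw [smul_zero, h.gauge_zero] at this
  exact zero_ne_one this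

lemma image_smul_eq (h : IsInvSupport q M) {X : Set (Euc (d + 1))} (hX : X ⊆ frontier M) (η : ℝ) :
    (fun p : Euc (d + 1) × ℝ => p.2 • p.1) '' (X ×ˢ Ioc 1 (1 + η)) =
      (gaugeCone (wulffGauge q) X ∩ {x | wulffGauge q x ≤ 1 + η}) \ {x | wulffGauge q x ≤ 1} := by
  ext y
  simp only [mem_image, mem_prod, mem_Ioc, Prod.exists, mem_sdiff, mem_inter_iff, mem_ofPred_eq,
    not_le]
  constructor
  · rintro ⟨x, s, ⟨hx, hs1, hs2⟩, rfl⟩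
    have hs0 : 0 < s := one_pos.trans hs1
    have hg := h.gauge_eq_one_of_mem_frontier (hX hx)
    refine ⟨⟨h.smul_mem_gaugeCone X s hs0 x ?_, ?_⟩, ?_⟩
    · rwa [gaugeCone, mem_ofPred_eq, hg, inv_one, one_smul]
    all_goals rwa [h.gauge_homogeneous s hs0, hg, mul_one]
  · rintro ⟨⟨hy, h1⟩, h2⟩
    refine ⟨_, wulffGauge q y, ⟨hy, h2, h1⟩, ?_⟩
    rw [smul_smul, mul_inv_cancel₀ (one_pos.trans h2).ne', one_smul]

lemma volume_image_smul (h : IsInvSupport q M) {X : Set (Euc (d + 1))} (hX : X ⊆ frontier M)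
    {η : ℝ} (hη : 0 < η) :
    volume ((fun p : Euc (d + 1) × ℝ => p.2 • p.1) '' (X ×ˢ Ioc 1 (1 + η))) =
      ENNReal.ofReal ((1 + η) ^ (d + 1) - 1) * volume (gaugeCone (wulffGauge q) X ∩ M) := by
  obtain ⟨c, hc, hcx⟩ := h.exists_norm_le
  have hfin := volume_gauge_le_ne_top hc hcx (gaugeCone (wulffGauge q) X)
  have h1 := volume_cone_inter_le h.gauge_homogeneous (h.smul_mem_gaugeCone X)
    (show 0 < 1 + η by linarith)
  have hms : MeasurableSet {x | wulffGauge q x ≤ 1} :=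
    measurableSet_le h.continuous_gauge.measurable measurable_const
  have h2 := measure_inter_add_sdiff (μ := volume)
    (gaugeCone (wulffGauge q) X ∩ {x | wulffGauge q x ≤ 1 + η}) hms
  have h3 : gaugeCone (wulffGauge q) X ∩ {x | wulffGauge q x ≤ 1 + η} ∩ {x | wulffGauge q x ≤ 1} =
      gaugeCone (wulffGauge q) X ∩ {x | wulffGauge q x ≤ 1} := by
    ext x
    simp only [mem_inter_iff, mem_ofPred_eq]
    exact ⟨fun ⟨⟨a, b⟩, c⟩ => ⟨a, c⟩, fun ⟨a, c⟩ => ⟨⟨a, by linarith⟩, c⟩⟩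
  have h4 : ENNReal.ofReal ((1 + η) ^ (d + 1)) = ENNReal.ofReal ((1 + η) ^ (d + 1) - 1) + 1 := by
    rw [← ENNReal.ofReal_one, ← ENNReal.ofReal_add _ zero_le_one, sub_add_cancel]
    exact sub_nonneg.2 (one_le_pow₀ (by linarith))
  rw [h1, h3, h4, add_mul, one_mul, add_comm] at h2
  rw [h.image_smul_eq hX]
  rw [← h.eq_setOf] at h2 hfin ⊢
  exact (ENNReal.add_left_inj hfin).1 h2

/-- On a small piece `X` of the boundary, where points and normals are almost constant, the
Hausdorff measure is comparable with `q` times the volume of the cone over `X`. -/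
lemma exists_piece_comparison (h : IsInvSupport q M) {κ : ℝ≥0∞}
    (hκ : ∀ s : Set (Euc d), μH[(d : ℝ)] s = κ * volume s) {K : NNReal} (hK : 1 < K) :
    ∃ δ : ℝ, 0 < δ ∧ ∀ (x₀ : Euc (d + 1)) (X : Set (Euc (d + 1))), x₀ ∈ frontier M →
      X ⊆ frontier M → (∀ x ∈ X, ‖x - x₀‖ ≤ δ ∧ ‖gaussMap M x - gaussMap M x₀‖ ≤ δ) →
      μH[(d : ℝ)] X ≤ K ^ (2 * d + 2) * (ENNReal.ofReal (q (gaussMap M x₀)) *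
        (κ * (d + 1) * volume (gaugeCone (wulffGauge q) X ∩ M))) ∧
      ENNReal.ofReal (q (gaussMap M x₀)) * (κ * (d + 1) *
        volume (gaugeCone (wulffGauge q) X ∩ M)) ≤ K ^ (2 * d + 2) * μH[(d : ℝ)] X := by
  obtain ⟨c, Q, hc, hcQ⟩ := h.exists_bounds
  have hQ : 0 < Q := hc.trans_le ((hcQ 0).1.trans (hcQ 0).2)
  obtain ⟨δ, hδ, H⟩ := exists_shell_comparison d hκ hK (inv_pos.2 hQ) (inv_pos.2 hc)
  refine ⟨δ, hδ, fun x₀ X hx₀ hX hδX => ?_⟩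
  have hK1 : (1 : ℝ) < K := by exact_mod_cast hK
  obtain ⟨η, hη, hηδ, h1, h2⟩ := exists_small_pow_sub_one d hK1 hδ
  set u := gaussMap M x₀ with hu
  have hnorm : ‖x₀‖ ≤ c⁻¹ := by
    have := norm_le_wulffGauge h.continuous (fun u => (hcQ u).1) x₀
    rw [h.gauge_eq_one_of_mem_frontier hx₀] at this
    rwa [← one_div, le_div_iff₀ hc, mul_comm]
  have hin : ⟪x₀, u⟫ = (q u)⁻¹ := h.inner_gaussMap hx₀
  obtain ⟨H1, H2⟩ := H u x₀ X η (mem_unitSphere.1 (h.gaussMap_mem hx₀)) hnorm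
    (hin ▸ inv_anti₀ (h.pos u) (hcQ u).2) (fun x hx => (hδX x hx).1)
    (fun x hx x' hx' => h.abs_inner_sub_le (hX hx) (hX hx') (hδX x hx).2 (hδX x' hx').2) hη hηδ
  rw [h.volume_image_smul hX hη, hin, mul_comm _ η, ENNReal.ofReal_mul hη.le] at H1 H2
  set V := volume (gaugeCone (wulffGauge q) X ∩ M)
  set E := ENNReal.ofReal η with hE
  have hE0 : E ≠ 0 := by simpa [hE] using hη
  have hEt : E ≠ ∞ := ENNReal.ofReal_ne_top
  have hP1 : (d + 1) * E ≤ ENNReal.ofReal ((1 + η) ^ (d + 1) - 1) := by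
    refine le_trans (le_of_eq ?_) (ENNReal.ofReal_le_ofReal h1)
    rw [ENNReal.ofReal_mul (by positivity), ENNReal.ofReal_add (by positivity) zero_le_one]
    simp [hE]
  have hP2 : ENNReal.ofReal ((1 + η) ^ (d + 1) - 1) ≤ K * ((d + 1) * E) := by
    refine (ENNReal.ofReal_le_ofReal h2).trans (le_of_eq ?_)
    rw [ENNReal.ofReal_mul (by positivity), ENNReal.ofReal_mul (by positivity),
      ENNReal.ofReal_add (by positivity) zero_le_one]
    simp [hE]
  have hw : ENNReal.ofReal (q u) * ENNReal.ofReal (q u)⁻¹ = 1 := by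
    rw [← ENNReal.ofReal_mul (h.pos u).le, mul_inv_cancel₀ (h.pos u).ne', ENNReal.ofReal_one]
  set a := ENNReal.ofReal (q u)
  set b := ENNReal.ofReal (q u)⁻¹
  set P := ENNReal.ofReal ((1 + η) ^ (d + 1) - 1)
  have hKE : (1 : ℝ≥0∞) ≤ K := by exact_mod_cast hK.le
  constructor
  · rw [← ENNReal.mul_le_mul_iff_right hE0 hEt]
    calc E * μH[(d : ℝ)] X = a * (E * b * μH[(d : ℝ)] X) := by
          rw [← mul_assoc, mul_left_comm a E, hw, mul_one]
      _ ≤ a * (K ^ (2 * d + 1) * (κ * (P * V))) := by gcongr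
      _ ≤ a * (K ^ (2 * d + 1) * (κ * ((K * ((d + 1) * E)) * V))) := by gcongr
      _ = _ := by ring
  · rw [← ENNReal.mul_le_mul_iff_right hE0 hEt]
    calc E * (a * (κ * (d + 1) * V)) = a * (κ * (((d + 1) * E) * V)) := by ring
      _ ≤ a * (κ * (P * V)) := by gcongr
      _ ≤ a * (K ^ (2 * d + 1) * (E * b * μH[(d : ℝ)] X)) := by gcongr
      _ = (a * b) * (K ^ (2 * d + 1) * (E * μH[(d : ℝ)] X)) := by ring
      _ = K ^ (2 * d + 1) * (E * μH[(d : ℝ)] X) := by rw [hw, one_mul]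
      _ ≤ K ^ (2 * d + 2) * (E * μH[(d : ℝ)] X) := by gcongr; simp
      _ = _ := by ring

end IsInvSupport

lemma ENNReal.le_of_forall_one_lt_le_pow_mul {a b : ℝ≥0∞} (n : ℕ)
    (h : ∀ K : NNReal, 1 < K → a ≤ K ^ n * b) : a ≤ b := by
  have ht : Filter.Tendsto (fun K : NNReal => (K : ℝ≥0∞) ^ n * b) (𝓝[>] 1) (𝓝 b) := by
    have h1 : Filter.Tendsto (fun K : NNReal => (K : ℝ≥0∞) ^ n) (𝓝[>] 1) (𝓝 1) := by
      have h2 : Continuous fun K : NNReal => (K : ℝ≥0∞) ^ n :=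
        (ENNReal.continuous_pow n).comp ENNReal.continuous_coe
      have h3 := h2.tendsto 1
      simp only [ENNReal.coe_one, one_pow] at h3
      exact h3.mono_left nhdsWithin_le_nhds
    simpa using ENNReal.Tendsto.mul_const h1 (Or.inl one_ne_zero)
  refine ge_of_tendsto ht ?_
  filter_upwards [self_mem_nhdsWithin] with K hK using h K hK

/-- The points mapped by `F` into the ball of radius `δ / 2` about the `k`-th point of a dense
sequence. -/
def densePiece {α β : Type*} [PseudoMetricSpace β] [TopologicalSpace.SeparableSpace β] [Nonempty β]
    (F : α → β) (δ : ℝ) (k : ℕ) : Set α :=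
  F ⁻¹' Metric.ball (TopologicalSpace.denseSeq β k) (δ / 2)

section DensePiece

variable {α β : Type*} [PseudoMetricSpace β] [TopologicalSpace.SeparableSpace β] [Nonempty β]

lemma iUnion_densePiece (F : α → β) {δ : ℝ} (hδ : 0 < δ) : ⋃ k, densePiece F δ k = univ := by
  rw [eq_univ_iff_forall]
  intro x
  obtain ⟨k, hk⟩ := (TopologicalSpace.denseRange_denseSeq β).exists_dist_lt (F x) (half_pos hδ)
  exact mem_iUnion.2 ⟨k, hk⟩

lemma dist_le_of_mem_densePiece {F : α → β} {δ : ℝ} {k : ℕ} {x y : α}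
    (hx : x ∈ densePiece F δ k) (hy : y ∈ densePiece F δ k) : dist (F x) (F y) ≤ δ := by
  have h1 : dist (F x) _ < δ / 2 := hx
  have h2 : dist (F y) _ < δ / 2 := hy
  linarith [dist_triangle_right (F x) (F y) (TopologicalSpace.denseSeq β k)]

end DensePiece

namespace IsInvSupport

variable {d : ℕ} {M : Set (Euc (d + 1))} {q : Euc (d + 1) → ℝ}

lemma hausdorffMeasure_frontier_not_differentiableAt (h : IsInvSupport q M) :
    μH[(d : ℝ)] (frontier M ∩ {x | ¬ DifferentiableAt ℝ (wulffGauge q) x}) = 0 := by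
  obtain ⟨κ, hκ0, hκt, hκ⟩ := exists_hausdorffMeasure_eq_mul_volume d
  obtain ⟨δ, hδ, H⟩ := h.exists_piece_comparison hκ (K := 2) (by norm_num)
  set E := frontier M ∩ {x | ¬ DifferentiableAt ℝ (wulffGauge q) x} with hE
  have hEf : E ⊆ frontier M := inter_subset_left
  have hV : volume (gaugeCone (wulffGauge q) E ∩ M) = 0 := by
    refine measure_mono_null ?_ h.ae_differentiableAt
    rintro x ⟨hx, -⟩ hd
    exact hx.2 (differentiableAt_wulffGauge_smul h.continuous
      (inv_pos.2 (h.gauge_pos (h.ne_zero_of_mem_gaugeCone hEf hx))) hd)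
  set F : Euc (d + 1) → Euc (d + 1) × Euc (d + 1) := fun x => (x, gaussMap M x) with hF
  rw [← inter_univ E, ← iUnion_densePiece F hδ, inter_iUnion]
  refine measure_iUnion_null fun k => ?_
  rcases eq_empty_or_nonempty (E ∩ densePiece F δ k) with he | ⟨x₀, hx₀, hx₀k⟩
  · rw [he, measure_empty]
  have h1 := (H x₀ (E ∩ densePiece F δ k) (hEf hx₀) (inter_subset_left.trans hEf) ?_).1
  · have h2 : volume (gaugeCone (wulffGauge q) (E ∩ densePiece F δ k) ∩ M) = 0 :=
      measure_mono_null (inter_subset_inter_left _ fun x hx => hx.1) hV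
    rw [h2] at h1
    simpa using h1
  · rintro x ⟨-, hx⟩
    have := dist_le_of_mem_densePiece hx hx₀k
    rw [Prod.dist_eq, max_le_iff, dist_eq_norm, dist_eq_norm] at this
    exact this

lemma gaussMap_ae_eq (h : IsInvSupport q M) :
    gaussMap M =ᵐ[μH[(d : ℝ)].restrict (frontier M)] gaugeNormal q := by
  rw [Filter.EventuallyEq, ae_restrict_iff' isClosed_frontier.measurableSet, ae_iff]
  refine measure_mono_null (fun x hx => ?_) h.hausdorffMeasure_frontier_not_differentiableAt
  rw [mem_ofPred_eq, Classical.not_imp] at hx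
  exact ⟨hx.1, fun hd => hx.2 (h.gaussMap_eq hx.1 hd)⟩

lemma surfMeasure_eq_hausdorffMeasure (h : IsInvSupport q M) {U : Set (Euc (d + 1))}
    (hU : MeasurableSet U) : surfMeasure M U = μH[(d : ℝ)]
      (frontier M ∩ {x | DifferentiableAt ℝ (wulffGauge q) x} ∩ gaugeNormal q ⁻¹' U) := by
  have e : (((d + 1 : ℕ) : ℝ) - 1) = d := by push_cast; ring
  rw [surfMeasure, e, Measure.map_congr h.gaussMap_ae_eq,
    Measure.map_apply (measurable_gaugeNormal q) hU,
    Measure.restrict_apply (measurable_gaugeNormal q hU)]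
  refine measure_congr ?_
  have h1 : ∀ᵐ x ∂μH[(d : ℝ)], x ∈ frontier M → DifferentiableAt ℝ (wulffGauge q) x := by
    rw [ae_iff]
    refine measure_mono_null (fun x hx => ?_) h.hausdorffMeasure_frontier_not_differentiableAt
    rw [mem_ofPred_eq, Classical.not_imp] at hx
    exact hx
  filter_upwards [h1] with x hx
  refine propext ⟨fun ⟨a, b⟩ => ⟨⟨b, hx b⟩, a⟩, fun ⟨⟨b, _⟩, a⟩ => ⟨a, b⟩⟩

lemma gaugeCone_ae_eq (h : IsInvSupport q M) (U : Set (Euc (d + 1))) :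
    gaugeCone (wulffGauge q)
      (frontier M ∩ {x | DifferentiableAt ℝ (wulffGauge q) x} ∩ gaugeNormal q ⁻¹' U) =ᵐ[volume]
      gaugeNormal q ⁻¹' U := by
  have h0 : ∀ᵐ x : Euc (d + 1), x ≠ 0 := by simp [ae_iff]
  filter_upwards [h.ae_differentiableAt, h0] with x hd hx
  have hg := inv_pos.2 (h.gauge_pos hx)
  refine propext ⟨fun hx' => ?_, fun hx' => ⟨⟨h.mem_frontier_of_gauge_eq_one ?_,
    differentiableAt_wulffGauge_smul h.continuous hg hd⟩, ?_⟩⟩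
  · have := hx'.2
    rwa [mem_preimage, gaugeNormal_smul h.continuous hg] at this
  · rw [h.gauge_homogeneous _ hg, inv_mul_cancel₀ (h.gauge_pos hx).ne']
  · rw [mem_preimage, gaugeNormal_smul h.continuous hg]
    exact hx'

end IsInvSupport

namespace IsInvSupport

variable {d : ℕ} {M : Set (Euc (d + 1))} {q : Euc (d + 1) → ℝ}

lemma measurableSet (h : IsInvSupport q M) : MeasurableSet M := by
  rw [h.eq_setOf]
  exact measurableSet_le h.continuous_gauge.measurable measurable_const

lemma measurableSet_gaugeCone (h : IsInvSupport q M) {X : Set (Euc (d + 1))}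
    (hX : MeasurableSet X) : MeasurableSet (gaugeCone (wulffGauge q) X) :=
  (h.continuous_gauge.measurable.inv.smul measurable_id) hX

lemma exists_ratio_le (h : IsInvSupport q M) {K : ℝ} (hK : 1 < K) :
    ∃ δ : ℝ, 0 < δ ∧ ∀ u ∈ unitSphere (d + 1), ∀ v ∈ unitSphere (d + 1), ‖u - v‖ ≤ δ →
      q u ≤ K * q v := by
  obtain ⟨c, Q, hc, hcQ⟩ := h.exists_bounds
  have huc := (isCompact_unitSphere (d + 1)).uniformContinuousOn_of_continuous
    h.continuous.continuousOn
  obtain ⟨δ, hδ, H⟩ := Metric.uniformContinuousOn_iff_le.1 huc ((K - 1) * c)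
    (mul_pos (sub_pos.2 hK) hc)
  refine ⟨δ, hδ, fun u hu v hv huv => ?_⟩
  have h1 := H u hu v hv (by rwa [dist_eq_norm])
  rw [Real.dist_eq] at h1
  have h2 := (abs_le.1 h1).2
  have h3 : (K - 1) * c ≤ (K - 1) * q v :=
    mul_le_mul_of_nonneg_left (hcQ v).1 (sub_pos.2 hK).le
  linarith

/-- The integral of `q ∘ gaugeNormal q` over the part of `M` in the cone over a boundary set. -/
lemma exists_piece_lintegral_comparison (h : IsInvSupport q M) {κ : ℝ≥0∞}
    (hκ : ∀ s : Set (Euc d), μH[(d : ℝ)] s = κ * volume s) {K : NNReal} (hK : 1 < K) :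
    ∃ δ : ℝ, 0 < δ ∧ ∀ X : Set (Euc (d + 1)), MeasurableSet X →
      X ⊆ frontier M ∩ {x | DifferentiableAt ℝ (wulffGauge q) x} →
      (∀ x ∈ X, ∀ y ∈ X, ‖x - y‖ ≤ δ ∧ ‖gaugeNormal q x - gaugeNormal q y‖ ≤ δ) →
      μH[(d : ℝ)] X ≤ K ^ (2 * d + 3) * (κ * (d + 1) *
        ∫⁻ x in gaugeCone (wulffGauge q) X ∩ M, ENNReal.ofReal (q (gaugeNormal q x))) ∧
      κ * (d + 1) * ∫⁻ x in gaugeCone (wulffGauge q) X ∩ M,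
        ENNReal.ofReal (q (gaugeNormal q x)) ≤ K ^ (2 * d + 3) * μH[(d : ℝ)] X := by
  obtain ⟨δ₁, hδ₁, H₁⟩ := h.exists_piece_comparison hκ hK
  obtain ⟨δ₂, hδ₂, H₂⟩ := h.exists_ratio_le (K := K) (by exact_mod_cast hK)
  refine ⟨min δ₁ δ₂, lt_min hδ₁ hδ₂, fun X hXm hX hδ => ?_⟩
  rcases eq_empty_or_nonempty X with rfl | ⟨x₀, hx₀⟩
  · simp [gaugeCone]
  have hXf : X ⊆ frontier M := hX.trans inter_subset_left
  have hN : ∀ x ∈ X, gaussMap M x = gaugeNormal q x := fun x hx =>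
    h.gaussMap_eq (hX hx).1 (hX hx).2
  obtain ⟨h1, h2⟩ := H₁ x₀ X (hXf hx₀) hXf fun x hx => by
    rw [hN x hx, hN x₀ hx₀]
    exact ⟨(hδ x hx x₀ hx₀).1.trans (min_le_left _ _), (hδ x hx x₀ hx₀).2.trans (min_le_left _ _)⟩
  rw [hN x₀ hx₀] at h1 h2
  have hCm : MeasurableSet (gaugeCone (wulffGauge q) X ∩ M) :=
    (h.measurableSet_gaugeCone hXm).inter h.measurableSet
  have hS : ∀ x ∈ X, gaugeNormal q x ∈ unitSphere (d + 1) := fun x hx =>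
    hN x hx ▸ h.gaussMap_mem (hXf hx)
  have hcone : ∀ x ∈ gaugeCone (wulffGauge q) X ∩ M, ∃ y ∈ X,
      gaugeNormal q x = gaugeNormal q y := by
    rintro x ⟨hx, -⟩
    exact ⟨_, hx, (gaugeNormal_smul h.continuous
      (inv_pos.2 (h.gauge_pos (h.ne_zero_of_mem_gaugeCone hXf hx))) x).symm⟩
  have hratio : ∀ x ∈ X, ∀ y ∈ X, ENNReal.ofReal (q (gaugeNormal q x)) ≤
      K * ENNReal.ofReal (q (gaugeNormal q y)) := by
    intro x hx y hy
    have := H₂ _ (hS x hx) _ (hS y hy) ((hδ x hx y hy).2.trans (min_le_right _ _))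
    rw [← ENNReal.ofReal_coe_nnreal, ← ENNReal.ofReal_mul K.coe_nonneg]
    exact ENNReal.ofReal_le_ofReal this
  set a := ENNReal.ofReal (q (gaugeNormal q x₀))
  set V := volume (gaugeCone (wulffGauge q) X ∩ M)
  have hI1 : ∫⁻ x in gaugeCone (wulffGauge q) X ∩ M, ENNReal.ofReal (q (gaugeNormal q x)) ≤
      K * (a * V) := by
    rw [← mul_assoc, ← setLIntegral_const]
    refine setLIntegral_mono' hCm fun x hx => ?_
    obtain ⟨y, hy, e⟩ := hcone x hx
    rw [e]
    exact hratio y hy x₀ hx₀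
  have hI2 : a * V ≤
      K * ∫⁻ x in gaugeCone (wulffGauge q) X ∩ M, ENNReal.ofReal (q (gaugeNormal q x)) := by
    rw [← setLIntegral_const, ← lintegral_const_mul' _ _ ENNReal.coe_ne_top]
    refine setLIntegral_mono' hCm fun x hx => ?_
    obtain ⟨y, hy, e⟩ := hcone x hx
    rw [e]
    exact hratio x₀ hx₀ y hy
  set I := ∫⁻ x in gaugeCone (wulffGauge q) X ∩ M, ENNReal.ofReal (q (gaugeNormal q x))
  constructor
  · calc μH[(d : ℝ)] X ≤ K ^ (2 * d + 2) * (a * (κ * (d + 1) * V)) := h1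
      _ = K ^ (2 * d + 2) * (κ * (d + 1) * (a * V)) := by ring
      _ ≤ K ^ (2 * d + 2) * (κ * (d + 1) * (K * I)) := by gcongr
      _ = _ := by ring
  · calc κ * (d + 1) * I ≤ κ * (d + 1) * (K * (a * V)) := by gcongr
      _ = K * (a * (κ * (d + 1) * V)) := by ring
      _ ≤ K * (K ^ (2 * d + 2) * μH[(d : ℝ)] X) := by gcongr
      _ = _ := by ring

lemma lintegral_comparison (h : IsInvSupport q M) {κ : ℝ≥0∞}
    (hκ : ∀ s : Set (Euc d), μH[(d : ℝ)] s = κ * volume s) {K : NNReal} (hK : 1 < K)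
    {S : Set (Euc (d + 1))} (hSm : MeasurableSet S)
    (hS : S ⊆ frontier M ∩ {x | DifferentiableAt ℝ (wulffGauge q) x}) :
    μH[(d : ℝ)] S ≤ K ^ (2 * d + 3) * (κ * (d + 1) *
        ∫⁻ x in gaugeCone (wulffGauge q) S ∩ M, ENNReal.ofReal (q (gaugeNormal q x))) ∧
      κ * (d + 1) * ∫⁻ x in gaugeCone (wulffGauge q) S ∩ M,
        ENNReal.ofReal (q (gaugeNormal q x)) ≤ K ^ (2 * d + 3) * μH[(d : ℝ)] S := by
  obtain ⟨δ, hδ, H⟩ := h.exists_piece_lintegral_comparison hκ hK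
  set F : Euc (d + 1) → Euc (d + 1) × Euc (d + 1) := fun x => (x, gaugeNormal q x) with hF
  have hFm : Measurable F := measurable_id.prodMk (measurable_gaugeNormal q)
  set B := disjointed (densePiece F δ) with hB
  have hBm : ∀ k, MeasurableSet (B k) := fun k =>
    MeasurableSet.disjointed (fun k => hFm measurableSet_ball) k
  have hBd : Pairwise (Function.onFun Disjoint B) := disjoint_disjointed _
  have hBu : ⋃ k, B k = univ := by rw [hB, iUnion_disjointed, iUnion_densePiece F hδ]
  have hX : ∀ k, _ := fun k => H (S ∩ B k) (hSm.inter (hBm k)) (inter_subset_left.trans hS)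
    fun x hx y hy => by
      have := dist_le_of_mem_densePiece (disjointed_subset _ k hx.2) (disjointed_subset _ k hy.2)
      rw [Prod.dist_eq, max_le_iff, dist_eq_norm, dist_eq_norm] at this
      exact this
  have hsum1 : μH[(d : ℝ)] S = ∑' k, μH[(d : ℝ)] (S ∩ B k) := by
    rw [← measure_iUnion, ← inter_iUnion, hBu, inter_univ]
    · exact fun i j hij => (hBd hij).mono inter_subset_right inter_subset_right
    · exact fun k => hSm.inter (hBm k)
  have hsum2 : ∫⁻ x in gaugeCone (wulffGauge q) S ∩ M, ENNReal.ofReal (q (gaugeNormal q x)) =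
      ∑' k, ∫⁻ x in gaugeCone (wulffGauge q) (S ∩ B k) ∩ M,
        ENNReal.ofReal (q (gaugeNormal q x)) := by
    rw [← lintegral_iUnion]
    · congr 2
      rw [← iUnion_inter]
      congr 1
      ext x
      simp only [gaugeCone, mem_iUnion, mem_ofPred_eq]
      have : (wulffGauge q x)⁻¹ • x ∈ ⋃ k, B k := hBu ▸ mem_univ _
      rw [mem_iUnion] at this
      exact ⟨fun hx => this.imp fun k hk => ⟨hx, hk⟩, fun ⟨k, hk⟩ => hk.1⟩
    · exact fun k => (h.measurableSet_gaugeCone (hSm.inter (hBm k))).inter h.measurableSet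
    · refine fun i j hij => Set.disjoint_left.2 fun x hx hx' => ?_
      exact Set.disjoint_left.1 (hBd hij) hx.1.2 hx'.1.2
  rw [hsum1, hsum2]
  simp only [← ENNReal.tsum_mul_left]
  exact ⟨ENNReal.tsum_le_tsum fun k => (hX k).1, ENNReal.tsum_le_tsum fun k => (hX k).2⟩

/-- The surface area measure as an integral over the body. -/
lemma exists_surfMeasure_eq_lintegral (h : IsInvSupport q M) :
    ∃ C : ℝ≥0∞, C ≠ 0 ∧ C ≠ ∞ ∧ ∀ U : Set (Euc (d + 1)), MeasurableSet U →
      surfMeasure M U =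
        C * ∫⁻ x in gaugeNormal q ⁻¹' U ∩ M, ENNReal.ofReal (q (gaugeNormal q x)) := by
  obtain ⟨κ, hκ0, hκt, hκ⟩ := exists_hausdorffMeasure_eq_mul_volume d
  refine ⟨κ * (d + 1), mul_ne_zero hκ0 (by simp), ENNReal.mul_ne_top hκt (by finiteness),
    fun U hU => ?_⟩
  have hDm : MeasurableSet {x | DifferentiableAt ℝ (wulffGauge q) x} :=
    measurableSet_of_differentiableAt ℝ _
  have hSm : MeasurableSet (frontier M ∩ {x | DifferentiableAt ℝ (wulffGauge q) x} ∩
      gaugeNormal q ⁻¹' U) :=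
    (isClosed_frontier.measurableSet.inter hDm).inter (measurable_gaugeNormal q hU)
  rw [h.surfMeasure_eq_hausdorffMeasure hU, ← setLIntegral_congr
    ((h.gaugeCone_ae_eq U).inter (Filter.EventuallyEq.refl _ M))]
  exact le_antisymm
    (ENNReal.le_of_forall_one_lt_le_pow_mul (2 * d + 3) fun K hK =>
      (h.lintegral_comparison hκ hK hSm inter_subset_left).1)
    (ENNReal.le_of_forall_one_lt_le_pow_mul (2 * d + 3) fun K hK =>
      (h.lintegral_comparison hκ hK hSm inter_subset_left).2)

end IsInvSupport

namespace IsInvSupport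

variable {d : ℕ} {M : Set (Euc (d + 1))} {q : Euc (d + 1) → ℝ}

lemma gaugeNormal_ae_mem (h : IsInvSupport q M) :
    ∀ᵐ x : Euc (d + 1), gaugeNormal q x ∈ unitSphere (d + 1) ∧
      wulffGauge q x = ⟪x, gaugeNormal q x⟫ * q (gaugeNormal q x) := by
  filter_upwards [h.ae_differentiableAt] with x hx
  exact gaugeNormal_mem h.continuous h.pos hx

lemma volume_ne_top (h : IsInvSupport q M) : volume M ≠ ∞ := by
  obtain ⟨c, hc, hcx⟩ := h.exists_norm_le
  have := volume_gauge_le_ne_top hc hcx univ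
  rwa [univ_inter, ← h.eq_setOf] at this

lemma isFiniteMeasure_surfMeasure (h : IsInvSupport q M) : IsFiniteMeasure (surfMeasure M) := by
  obtain ⟨C, -, hC, H⟩ := h.exists_surfMeasure_eq_lintegral
  obtain ⟨c, Q, -, hcQ⟩ := h.exists_bounds
  refine ⟨?_⟩
  rw [H univ MeasurableSet.univ, preimage_univ, univ_inter]
  refine ENNReal.mul_lt_top hC.lt_top ((lintegral_mono (g := fun _ => ENNReal.ofReal Q)
    fun x => ENNReal.ofReal_le_ofReal (hcQ _).2).trans_lt ?_)
  rw [setLIntegral_const]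
  exact ENNReal.mul_lt_top ENNReal.ofReal_lt_top h.volume_ne_top.lt_top

lemma surfMeasure_compl_unitSphere (h : IsInvSupport q M) :
    surfMeasure M (unitSphere (d + 1))ᶜ = 0 := by
  obtain ⟨C, -, -, H⟩ := h.exists_surfMeasure_eq_lintegral
  have h0 : volume (gaugeNormal q ⁻¹' (unitSphere (d + 1))ᶜ ∩ M) = 0 :=
    measure_mono_null inter_subset_left (h.gaugeNormal_ae_mem.mono fun x hx => hx.1)
  rw [H _ (isCompact_unitSphere _).isClosed.measurableSet.compl,
    setLIntegral_measure_zero _ _ h0, mul_zero]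

lemma surfMeasure_ne_zero (h : IsInvSupport q M) {U : Set (Euc (d + 1))} (hU : MeasurableSet U)
    (hV : volume (gaugeNormal q ⁻¹' U ∩ M) ≠ 0) : surfMeasure M U ≠ 0 := by
  obtain ⟨C, hC, -, H⟩ := h.exists_surfMeasure_eq_lintegral
  rw [H U hU]
  refine mul_ne_zero hC fun h0 => hV ?_
  have hm : Measurable fun x => ENNReal.ofReal (q (gaugeNormal q x)) :=
    (h.continuous.measurable.comp (measurable_gaugeNormal q)).ennreal_ofReal
  rw [lintegral_eq_zero_iff hm] at h0
  have : ∀ᵐ x ∂volume.restrict (gaugeNormal q ⁻¹' U ∩ M), False := by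
    filter_upwards [h0] with x hx
    exact (ENNReal.ofReal_pos.2 (h.pos _)).ne' hx
  rwa [Filter.eventually_false_iff_eq_bot, ae_eq_bot, Measure.restrict_eq_zero] at this

/-- Every open hemisphere has positive surface area measure. -/
lemma surfMeasure_pos_of_inner_pos (h : IsInvSupport q M) {v : Euc (d + 1)} (hv : v ≠ 0) :
    surfMeasure M {u | u ∈ unitSphere (d + 1) ∧ 0 < ⟪v, u⟫} ≠ 0 := by
  have hm : MeasurableSet {u | u ∈ unitSphere (d + 1) ∧ 0 < ⟪v, u⟫} := by
    have ho : IsOpen {u | 0 < ⟪v, u⟫} := isOpen_lt continuous_const (by fun_prop)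
    exact (isCompact_unitSphere _).isClosed.measurableSet.inter ho.measurableSet
  refine h.surfMeasure_ne_zero hm ?_
  obtain ⟨c, Q, hc, hcQ⟩ := h.exists_bounds
  have hQ : 0 < Q := hc.trans_le ((hcQ 0).1.trans (hcQ 0).2)
  set w := (2 * wulffGauge q v)⁻¹ • v with hw
  have hgv := h.gauge_pos hv
  have hgw : wulffGauge q w = 1 / 2 := by
    rw [hw, h.gauge_homogeneous _ (by positivity)]
    field_simp
  have hopen : IsOpen {x | wulffGauge q x < 1 ∧ Q * ‖x - w‖ < wulffGauge q x} := by
    have := h.continuous_gauge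
    exact (isOpen_lt this continuous_const).inter (isOpen_lt (by fun_prop) this)
  have hne : {x | wulffGauge q x < 1 ∧ Q * ‖x - w‖ < wulffGauge q x}.Nonempty :=
    ⟨w, by rw [mem_ofPred_eq, hgw]; norm_num⟩
  refine ((hopen.measure_pos volume hne).trans_le (measure_mono_ae ?_)).ne'
  filter_upwards [h.gaugeNormal_ae_mem] with x hx hx'
  refine ⟨⟨hx.1, ?_⟩, (h.gauge_le_one_iff x).1 hx'.1.le⟩
  set u := gaugeNormal q x
  have h1 : ⟪x - w, u⟫ ≤ ‖x - w‖ := by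
    have := real_inner_le_norm (x - w) u
    rwa [mem_unitSphere.1 hx.1, mul_one] at this
  have h2 : 0 < ⟪w, u⟫ := by
    rw [inner_sub_left] at h1
    have h3 : Q * ‖x - w‖ < ⟪x, u⟫ * q u := hx.2 ▸ hx'.2
    have h4 : ⟪x, u⟫ * q u ≤ (‖x - w‖ + ⟪w, u⟫) * q u :=
      mul_le_mul_of_nonneg_right (by linarith) (h.pos u).le
    have h5 : ‖x - w‖ * q u ≤ ‖x - w‖ * Q := mul_le_mul_of_nonneg_left (hcQ u).2 (norm_nonneg _)
    have h6 : 0 < ⟪w, u⟫ * q u := by linarith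
    exact pos_of_mul_pos_left h6 (h.pos u).le
  rw [hw, real_inner_smul_left] at h2
  exact pos_of_mul_pos_right h2 (by positivity)

/-- Integrals against the surface area measure as exponential integrals over the whole space. -/
lemma exists_integral_surfMeasure (h : IsInvSupport q M) :
    ∃ C : ℝ, 0 < C ∧ ∀ f : Euc (d + 1) → ℝ, Continuous f → ∫ u, f u ∂(surfMeasure M) =
      C * ∫ x, f (gaugeNormal q x) * q (gaugeNormal q x) *
        (wulffGauge q x * Real.exp (-wulffGauge q x)) := by
  obtain ⟨C, hC0, hCt, H⟩ := h.exists_surfMeasure_eq_lintegral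
  set ρ := radialMass d (fun t => ENNReal.ofReal (t ^ 1 * Real.exp (-t))) with hρ
  have hρ0 : ρ ≠ 0 := radialMass_ne_zero d 1
  have hρt : ρ ≠ ∞ := radialMass_ne_top d 1
  have hGm := measurable_gaugeNormal q
  have hgm := h.continuous_gauge.measurable
  obtain ⟨c, hc, hcx⟩ := h.exists_norm_le
  have hE : Measurable fun x => ENNReal.ofReal (wulffGauge q x * Real.exp (-wulffGauge q x)) := by
    fun_prop
  have hqm : Measurable fun u => ENNReal.ofReal (q u) := h.continuous.measurable.ennreal_ofReal
  set ν₁ := (volume.restrict M).map (gaugeNormal q) with hν₁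
  set ν₂ := (volume.withDensity
    fun x => ENNReal.ofReal (wulffGauge q x * Real.exp (-wulffGauge q x))).map (gaugeNormal q)
    with hν₂
  have h12 : ν₂ = ρ • ν₁ := by
    ext U hU
    have hcone := lintegral_cone_gauge hgm h.gauge_homogeneous (fun x hx => h.gauge_pos hx)
      (hGm hU) (fun c hc x hx => by rwa [mem_preimage, gaugeNormal_smul h.continuous hc])
      (volume_gauge_le_ne_top hc hcx _) (φ := fun t => ENNReal.ofReal (t ^ 1 * Real.exp (-t)))
      (by fun_prop)
    rw [hν₂, Measure.map_apply hGm hU, withDensity_apply _ (hGm hU), Measure.smul_apply, hν₁,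
      Measure.map_apply hGm hU, Measure.restrict_apply (hGm hU), smul_eq_mul, hρ]
    rw [← h.eq_setOf] at hcone
    simpa using hcone
  have hS : surfMeasure M = (C * ρ⁻¹) • ν₂.withDensity fun u => ENNReal.ofReal (q u) := by
    ext U hU
    rw [H U hU, Measure.smul_apply, withDensity_apply _ hU, h12, Measure.restrict_smul,
      lintegral_smul_measure, hν₁, smul_eq_mul, smul_eq_mul, Measure.restrict_map hGm hU,
      lintegral_map hqm hGm, Measure.restrict_restrict (hGm hU), mul_assoc C, ← mul_assoc ρ⁻¹,
      ENNReal.inv_mul_cancel hρ0 hρt, one_mul]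
  refine ⟨(C * ρ⁻¹).toReal, ENNReal.toReal_pos (mul_ne_zero hC0 (ENNReal.inv_ne_zero.2 hρt))
    (ENNReal.mul_ne_top hCt (ENNReal.inv_ne_top.2 hρ0)), fun f hf => ?_⟩
  rw [hS, integral_smul_measure, smul_eq_mul, integral_withDensity_eq_integral_toReal_smul hqm
    (by simp), hν₂, integral_map hGm.aemeasurable, integral_withDensity_eq_integral_toReal_smul hE
    (by simp)]
  · congr 2
    ext x
    have h1 : 0 ≤ wulffGauge q x := (by positivity : 0 ≤ c * ‖x‖).trans (hcx x)
    rw [ENNReal.toReal_ofReal (by positivity), ENNReal.toReal_ofReal (h.pos _).le]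
    simp only [smul_eq_mul]
    ring
  · exact (hqm.ennreal_toReal.smul hf.measurable).aestronglyMeasurable

end IsInvSupport

/-- The first order perturbation of `q` in direction `φ`. -/
def perturb {m : ℕ} (q φ : Euc m → ℝ) (s : ℝ) (u : Euc m) : ℝ := q u * (1 - s * φ u)

lemma abs_exp_neg_sub_le {a b c : ℝ} (ha : c ≤ a) (hb : c ≤ b) :
    |Real.exp (-a) - Real.exp (-b)| ≤ Real.exp (-c) * |a - b| := by
  have key : ∀ a b : ℝ, c ≤ a → a ≤ b → |Real.exp (-a) - Real.exp (-b)| ≤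
      Real.exp (-c) * |a - b| := by
    intro a b ha hab
    have h1 : Real.exp (-b) = Real.exp (-a) * Real.exp (-(b - a)) := by
      rw [← Real.exp_add]; ring_nf
    have h2 := Real.add_one_le_exp (-(b - a))
    have h3 : Real.exp (-a) ≤ Real.exp (-c) := Real.exp_le_exp.2 (by linarith)
    have h4 : Real.exp (-b) ≤ Real.exp (-a) := Real.exp_le_exp.2 (by linarith)
    rw [abs_of_nonneg (sub_nonneg.2 h4), abs_sub_comm, abs_of_nonneg (sub_nonneg.2 hab), h1]
    have h5 := Real.exp_pos (-a)
    nlinarith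
  rcases le_total a b with h | h
  · exact key a b ha h
  · rw [abs_sub_comm, abs_sub_comm a]
    exact key b a hb h

namespace IsInvSupport

variable {d : ℕ} {M : Set (Euc (d + 1))} {q φ : Euc (d + 1) → ℝ}

lemma continuous_perturb (h : IsInvSupport q M) (hφ : Continuous φ) (s : ℝ) :
    Continuous (perturb q φ s) := by
  have := h.continuous
  unfold perturb
  fun_prop

lemma abs_sub_wulffGauge_perturb_le (h : IsInvSupport q M) (hφ : Continuous φ)
    (hφ1 : ∀ u, |φ u| ≤ 1) {Q : ℝ} (hQ : ∀ u, q u ≤ Q) (x : Euc (d + 1)) (s t : ℝ) :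
    |wulffGauge (perturb q φ s) x - wulffGauge (perturb q φ t) x| ≤ Q * ‖x‖ * |s - t| := by
  have key : ∀ s t, wulffGauge (perturb q φ s) x ≤
      wulffGauge (perturb q φ t) x + Q * ‖x‖ * |s - t| := by
    intro s t
    rw [wulffGauge_le_iff (h.continuous_perturb hφ s)]
    intro u hu
    have h1 := le_wulffGauge (h.continuous_perturb hφ t) x hu
    have h2 : ⟪x, u⟫ * perturb q φ s u =
        ⟪x, u⟫ * perturb q φ t u + ⟪x, u⟫ * q u * (φ u * (t - s)) := by
      unfold perturb; ring
    have h3 : |⟪x, u⟫ * q u * (φ u * (t - s))| ≤ (‖x‖ * Q) * (1 * |s - t|) := by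
      rw [abs_mul, abs_mul, abs_mul, abs_of_pos (h.pos u), abs_sub_comm t]
      have h4 := abs_real_inner_le_norm x u
      rw [mem_unitSphere.1 hu, mul_one] at h4
      have := hQ u
      have := hφ1 u
      have := (h.pos u).le
      have : 0 ≤ Q := (h.pos u).le.trans (hQ u)
      gcongr
    linarith [le_abs_self (⟪x, u⟫ * q u * (φ u * (t - s)))]
  rw [abs_le]
  constructor
  · have := key t s
    rw [abs_sub_comm] at this
    linarith
  · linarith [key s t]

lemma norm_le_wulffGauge_perturb (h : IsInvSupport q M) (hφ : Continuous φ)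
    (hφ1 : ∀ u, |φ u| ≤ 1) {c : ℝ} (hcq : ∀ u, c ≤ q u) {s : ℝ}
    (hs : |s| ≤ 1 / 2) (x : Euc (d + 1)) : c / 2 * ‖x‖ ≤ wulffGauge (perturb q φ s) x := by
  refine norm_le_wulffGauge (h.continuous_perturb hφ s) (fun u => ?_) x
  have h1 : s * φ u ≤ 1 / 2 := by
    refine (le_abs_self _).trans ?_
    rw [abs_mul]
    have := mul_le_mul hs (hφ1 u) (abs_nonneg _) (by norm_num)
    linarith
  have := hcq u
  have := h.pos u
  unfold perturb
  nlinarith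

lemma hasDerivAt_wulffGauge_perturb (h : IsInvSupport q M) (hφ : Continuous φ)
    (hφ1 : ∀ u, |φ u| ≤ 1) {x : Euc (d + 1)} (hx0 : x ≠ 0)
    (hx : DifferentiableAt ℝ (wulffGauge q) x) :
    HasDerivAt (fun s => wulffGauge (perturb q φ s) x)
      (-(wulffGauge q x * φ (gaugeNormal q x))) 0 := by
  have hp0 : perturb q φ 0 = q := by ext u; simp [perturb]
  set g := wulffGauge q x with hg
  have hg0 : 0 < g := h.gauge_pos hx0
  obtain ⟨hu₀, e₀⟩ := gaugeNormal_mem h.continuous h.pos hx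
  set u₀ := gaugeNormal q x with hu₀'
  rw [hasDerivAt_iff_isLittleO, Asymptotics.isLittleO_iff]
  intro ε hε
  have hT : ∃ b < g, ∀ u ∈ unitSphere (d + 1), ε / g ≤ |φ u - φ u₀| → ⟪x, u⟫ * q u ≤ b := by
    set T := unitSphere (d + 1) ∩ {u | ε / g ≤ |φ u - φ u₀|} with hTdef
    have hTc : IsCompact T := (isCompact_unitSphere _).inter_right
      (isClosed_le continuous_const (by fun_prop))
    rcases T.eq_empty_or_nonempty with hT | hT
    · refine ⟨g - 1, by linarith, fun u hu hu' => ?_⟩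
      have : u ∈ T := ⟨hu, hu'⟩
      simp [hT] at this
    · have hqc := h.continuous
      obtain ⟨u₁, hu₁, hmax⟩ := hTc.exists_isMaxOn hT
        (f := fun u => ⟪x, u⟫ * q u) (by fun_prop)
      refine ⟨⟪x, u₁⟫ * q u₁, lt_of_le_of_ne (le_wulffGauge h.continuous x hu₁.1) fun e => ?_,
        fun u hu hu' => hmax ⟨hu, hu'⟩⟩
      have h1 := gaugeNormal_eq h.continuous h.pos hx hu₁.1 e.symm
      have h2 := hu₁.2
      rw [mem_ofPred_eq, ← h1, ← hu₀', sub_self, abs_zero] at h2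
      exact absurd h2 (not_le.2 (by positivity))
  obtain ⟨b, hb, hbT⟩ := hT
  have hev1 : ∀ᶠ s : ℝ in 𝓝 0, |s| * (g + |b|) < g - b := by
    have : Filter.Tendsto (fun s : ℝ => |s| * (g + |b|)) (𝓝 0) (𝓝 (|0| * (g + |b|))) :=
      Continuous.tendsto (by fun_prop) _
    rw [abs_zero, zero_mul] at this
    exact this.eventually (Iio_mem_nhds (sub_pos.2 hb))
  have hev2 : ∀ᶠ s : ℝ in 𝓝 0, |s| ≤ 1 := by
    have : Filter.Tendsto (fun s : ℝ => |s|) (𝓝 0) (𝓝 |0|) := Continuous.tendsto (by fun_prop) _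
    rw [abs_zero] at this
    exact this.eventually (Iic_mem_nhds one_pos)
  filter_upwards [hev1, hev2] with s hs1 hs2
  rw [hp0, sub_zero, smul_eq_mul, Real.norm_eq_abs, Real.norm_eq_abs, ← hg]
  have hlow : g * (1 - s * φ u₀) ≤ wulffGauge (perturb q φ s) x := by
    have := le_wulffGauge (h.continuous_perturb hφ s) x hu₀
    rw [perturb, ← mul_assoc, ← e₀] at this
    exact this
  have hsφ : ∀ u, |s * φ u| ≤ |s| := fun u => by
    rw [abs_mul]
    exact mul_le_of_le_one_right (abs_nonneg _) (hφ1 u)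
  obtain ⟨u, hu, e⟩ := exists_wulffGauge_eq (h.continuous_perturb hφ s) x
  rw [perturb, ← mul_assoc] at e
  have hnot : |φ u - φ u₀| < ε / g := by
    by_contra hcon
    have h1 := hbT u hu (not_lt.1 hcon)
    have h2 : (0 : ℝ) ≤ 1 - s * φ u := by linarith [(abs_le.1 (hsφ u)).2]
    have h3 := mul_le_mul_of_nonneg_right h1 h2
    have h4 : |b * (s * φ u)| ≤ |b| * |s| := by
      rw [abs_mul]
      exact mul_le_mul_of_nonneg_left (hsφ u) (abs_nonneg _)
    have h5 : g * (s * φ u₀) ≤ g * |s| :=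
      mul_le_mul_of_nonneg_left ((le_abs_self _).trans (hsφ u₀)) hg0.le
    have h6 := (abs_le.1 h4).1
    rw [← e] at h3
    nlinarith
  have hup : wulffGauge (perturb q φ s) x ≤ g * (1 - s * φ u) := by
    rw [e]
    exact mul_le_mul_of_nonneg_right (le_wulffGauge h.continuous x hu)
      (by linarith [(abs_le.1 (hsφ u)).2])
  rw [abs_of_nonneg (by linarith)]
  have h7 : g * (s * (φ u₀ - φ u)) ≤ g * (|s| * (ε / g)) := by
    refine mul_le_mul_of_nonneg_left ((le_abs_self _).trans ?_) hg0.le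
    rw [abs_mul, abs_sub_comm (φ u₀)]
    exact mul_le_mul_of_nonneg_left hnot.le (abs_nonneg _)
  have h8 : g * (|s| * (ε / g)) = ε * |s| := by field_simp
  linarith

end IsInvSupport

namespace IsInvSupport

variable {d : ℕ} {M : Set (Euc (d + 1))} {q φ : Euc (d + 1) → ℝ}

lemma hasDerivAt_integral_exp_perturb (h : IsInvSupport q M) (hφ : Continuous φ)
    (hφ1 : ∀ u, |φ u| ≤ 1) :
    HasDerivAt (fun s => ∫ x, Real.exp (-wulffGauge (perturb q φ s) x))
      (∫ x, φ (gaugeNormal q x) * (wulffGauge q x * Real.exp (-wulffGauge q x))) 0 := by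
  obtain ⟨c, Q, hc, hcQ⟩ := h.exists_bounds
  have hQ : 0 ≤ Q := hc.le.trans ((hcQ 0).1.trans (hcQ 0).2)
  have hp0 : perturb q φ 0 = q := by ext u; simp [perturb]
  have hcont : ∀ s, Continuous (wulffGauge (perturb q φ s)) := by
    intro s
    refine (lipschitzWith_wulffGauge (h.continuous_perturb hφ s)
      (Q := ((1 + |s|) * Q).toNNReal) fun u => ?_).continuous
    refine le_trans ?_ (Real.le_coe_toNNReal _)
    rw [perturb, abs_mul, abs_of_pos (h.pos u), mul_comm]
    have h1 : |1 - s * φ u| ≤ 1 + |s| := by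
      refine (abs_sub _ _).trans ?_
      rw [abs_one, abs_mul]
      linarith [mul_le_of_le_one_right (abs_nonneg s) (hφ1 u)]
    exact mul_le_mul h1 (hcQ u).2 (h.pos u).le (by positivity)
  have hball : ∀ s ∈ Metric.ball (0 : ℝ) (1 / 2), |s| ≤ 1 / 2 := fun s hs => by
    rw [mem_ball_zero_iff] at hs
    exact hs.le
  have hgm := h.continuous_gauge.measurable
  have h0 : ∀ᵐ x : Euc (d + 1), x ≠ 0 := by simp [ae_iff]
  refine (hasDerivAt_integral_of_dominated_loc_of_lip
    (F := fun s x => Real.exp (-wulffGauge (perturb q φ s) x))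
    (bound := fun x => Q * (‖x‖ ^ 1 * Real.exp (-(c / 2 * ‖x‖))))
    (Metric.ball_mem_nhds (0 : ℝ) (by norm_num : (0 : ℝ) < 1 / 2)) (Filter.Eventually.of_forall
      fun s => (Real.continuous_exp.comp (hcont s).neg).aestronglyMeasurable) ?_ ?_ ?_ ?_ ?_).2
  · simp only [hp0]
    have hi := integrable_norm_pow_mul_exp (d := d) 0 hc
    simp only [pow_zero, one_mul] at hi
    refine hi.mono' (Real.continuous_exp.comp h.continuous_gauge.neg).aestronglyMeasurable
      (Filter.Eventually.of_forall fun x => ?_)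
    rw [Real.norm_eq_abs, Real.abs_exp]
    exact Real.exp_le_exp.2 (neg_le_neg
      (norm_le_wulffGauge h.continuous (fun u => (hcQ u).1) x))
  · exact ((hφ.measurable.comp (measurable_gaugeNormal q)).mul
      (by fun_prop)).aestronglyMeasurable
  · refine Filter.Eventually.of_forall fun x => LipschitzOnWith.of_dist_le_mul fun s hs t ht => ?_
    rw [Real.dist_eq, Real.dist_eq, Real.coe_nnabs,
      abs_of_nonneg (by positivity : 0 ≤ Q * (‖x‖ ^ 1 * Real.exp (-(c / 2 * ‖x‖))))]
    have h1 := abs_exp_neg_sub_le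
      (h.norm_le_wulffGauge_perturb hφ hφ1 (fun u => (hcQ u).1) (hball s hs) x)
      (h.norm_le_wulffGauge_perturb hφ hφ1 (fun u => (hcQ u).1) (hball t ht) x)
    refine h1.trans ?_
    have h2 := h.abs_sub_wulffGauge_perturb_le hφ hφ1 (fun u => (hcQ u).2) x s t
    refine (mul_le_mul_of_nonneg_left h2 (Real.exp_pos _).le).trans (le_of_eq ?_)
    ring
  · exact (integrable_norm_pow_mul_exp (d := d) 1 (half_pos hc)).const_mul Q
  · filter_upwards [h.ae_differentiableAt, h0] with x hx hx0
    have h1 := (h.hasDerivAt_wulffGauge_perturb hφ hφ1 hx0 hx).neg.exp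
    simp only [hp0, Pi.neg_apply, neg_neg] at h1
    refine HasDerivAt.congr_deriv h1 ?_
    ring

/-- First variation of volume: perturbing the support function to first order changes the volume
of the Wulff shape by the integral of the perturbation against the surface area measure. -/
lemma exists_hasDerivAt_volume (h : IsInvSupport q M) :
    ∃ C : ℝ, 0 < C ∧ ∀ φ : Euc (d + 1) → ℝ, Continuous φ → (∀ u, |φ u| ≤ 1) →
      HasDerivAt (fun s => (volume {x | wulffGauge (perturb q φ s) x ≤ 1}).toReal)
        (C * ∫ u, φ u * (q u)⁻¹ ∂(surfMeasure M)) 0 := by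
  obtain ⟨c, Q, hc, hcQ⟩ := h.exists_bounds
  obtain ⟨C, hC, H⟩ := h.exists_integral_surfMeasure
  set ρ := radialMass d (fun t => ENNReal.ofReal (t ^ 0 * Real.exp (-t))) with hρ
  have hρ' : 0 < ρ.toReal := ENNReal.toReal_pos (radialMass_ne_zero d 0) (radialMass_ne_top d 0)
  refine ⟨(C * ρ.toReal)⁻¹, by positivity, fun φ hφ hφ1 => ?_⟩
  have hf : Continuous fun u => φ u * (q u)⁻¹ :=
    hφ.mul (h.continuous.inv₀ fun u => (h.pos u).ne')
  have h1 := h.hasDerivAt_integral_exp_perturb hφ hφ1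
  have h2 := H _ hf
  simp only [inv_mul_cancel_right₀ (h.pos _).ne'] at h2
  have h3 := h1.const_mul ρ.toReal⁻¹
  have h4 : (C * ρ.toReal)⁻¹ * ∫ u, φ u * (q u)⁻¹ ∂(surfMeasure M) =
      ρ.toReal⁻¹ * ∫ x, φ (gaugeNormal q x) * (wulffGauge q x * Real.exp (-wulffGauge q x)) := by
    rw [h2, mul_inv]
    field_simp
  rw [h4]
  refine h3.congr_of_eventuallyEq ?_
  filter_upwards [Metric.ball_mem_nhds (0 : ℝ) (by norm_num : (0 : ℝ) < 1 / 2)] with s hs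
  rw [mem_ball_zero_iff, Real.norm_eq_abs] at hs
  have hqc := h.continuous_perturb hφ s
  have hlow := h.norm_le_wulffGauge_perturb hφ hφ1 (fun u => (hcQ u).1) hs.le
  have hgc : Measurable (wulffGauge (perturb q φ s)) := by
    refine (lipschitzWith_wulffGauge hqc (Q := (2 * Q).toNNReal) fun u => ?_).continuous.measurable
    refine le_trans ?_ (Real.le_coe_toNNReal _)
    have h5 : |1 - s * φ u| ≤ 2 := by
      refine (abs_sub _ _).trans ?_
      rw [abs_one, abs_mul]
      linarith [mul_le_of_le_one_right (abs_nonneg s) (hφ1 u)]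
    rw [perturb, abs_mul, abs_of_pos (h.pos u), mul_comm]
    exact mul_le_mul h5 (hcQ u).2 (h.pos u).le (by positivity)
  have hcone := lintegral_cone_gauge (C := univ) hgc
    (fun c hc x => wulffGauge_smul hqc hc.le x)
    (fun x hx => (mul_pos (half_pos hc) (norm_pos_iff.2 hx)).trans_le (hlow x))
    MeasurableSet.univ (fun _ _ _ _ => mem_univ _)
    (volume_gauge_le_ne_top (half_pos hc) hlow _)
    (φ := fun t => ENNReal.ofReal (t ^ 0 * Real.exp (-t))) (by fun_prop)
  rw [univ_inter, Measure.restrict_univ, ← hρ] at hcone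
  simp only [pow_zero, one_mul] at hcone
  rw [integral_eq_lintegral_of_nonneg_ae (Filter.Eventually.of_forall fun x => (Real.exp_pos _).le)
    (by fun_prop), hcone, ENNReal.toReal_mul, inv_mul_cancel_left₀ hρ'.ne']

end IsInvSupport

section SphereMeasure

variable {d : ℕ} {σ : Measure (Euc (d + 1))}

lemma integrable_of_continuous_of_sphere [IsFiniteMeasure σ] (hσ : σ (unitSphere (d + 1))ᶜ = 0)
    {E : Type*} [NormedAddCommGroup E] [SecondCountableTopology E] [MeasurableSpace E]
    [BorelSpace E] {f : Euc (d + 1) → E} (hf : Continuous f) : Integrable f σ := by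
  obtain ⟨B, hB⟩ := (isCompact_unitSphere (d + 1)).exists_bound_of_continuousOn hf.continuousOn
  have hae : ∀ᵐ u ∂σ, u ∈ unitSphere (d + 1) := mem_ae_iff.2 hσ
  exact Integrable.of_bound hf.measurable.aestronglyMeasurable B (hae.mono hB)

end SphereMeasure

namespace IsInvSupport

variable {d : ℕ} {M : Set (Euc (d + 1))} {q φ : Euc (d + 1) → ℝ}

lemma volume_perturb_ne_top (h : IsInvSupport q M) (hφ : Continuous φ)
    (hφ1 : ∀ u, |φ u| ≤ 1) {s : ℝ} (hs : |s| ≤ 1 / 2) :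
    volume {x | wulffGauge (perturb q φ s) x ≤ 1} ≠ ∞ := by
  obtain ⟨c, Q, hc, hcQ⟩ := h.exists_bounds
  have := volume_gauge_le_ne_top (half_pos hc)
    (h.norm_le_wulffGauge_perturb hφ hφ1 (fun u => (hcQ u).1) hs) univ
  rwa [univ_inter] at this

lemma integral_inner_surfMeasure_of_le (h : IsInvSupport q M) {Q : ℝ} (hQ : ∀ u, q u ≤ Q)
    {v : Euc (d + 1)} (hv : ‖v‖ * Q ≤ 1) : ∫ u, ⟪v, u⟫ ∂(surfMeasure M) = 0 := by
  obtain ⟨C, hC, H⟩ := h.exists_hasDerivAt_volume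
  have hqc := h.continuous
  set φ : Euc (d + 1) → ℝ := fun u => max (-1) (min 1 (⟪v, u⟫ * q u)) with hφdef
  have hφ : Continuous φ := by fun_prop
  have hφ1 : ∀ u, |φ u| ≤ 1 := fun u =>
    abs_le.2 ⟨le_max_left _ _, max_le (by norm_num) (min_le_left _ _)⟩
  have hφe : ∀ u ∈ unitSphere (d + 1), φ u = ⟪v, u⟫ * q u := by
    intro u hu
    have h1 : |⟪v, u⟫ * q u| ≤ 1 := by
      rw [abs_mul, abs_of_pos (h.pos u)]
      refine le_trans (mul_le_mul ?_ (hQ u) (h.pos u).le (norm_nonneg v)) hv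
      have := abs_real_inner_le_norm v u
      rwa [mem_unitSphere.1 hu, mul_one] at this
    rw [abs_le] at h1
    simp only [hφdef]
    rw [min_eq_right h1.2, max_eq_right h1.1]
  have hderiv := H φ hφ hφ1
  have hp0 : perturb q φ 0 = q := by ext u; simp [perturb]
  have hmin : IsLocalMin (fun s => (volume {x | wulffGauge (perturb q φ s) x ≤ 1}).toReal) 0 := by
    filter_upwards [Metric.ball_mem_nhds (0 : ℝ) (by norm_num : (0 : ℝ) < 1 / 2)] with s hs
    rw [mem_ball_zero_iff, Real.norm_eq_abs] at hs
    refine ENNReal.toReal_mono (h.volume_perturb_ne_top hφ hφ1 hs.le) ?_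
    rw [hp0, ← measure_preimage_add_right volume (-(s • v)) {x | wulffGauge q x ≤ 1}]
    refine measure_mono fun x hx => ?_
    rw [mem_preimage, mem_ofPred_eq, wulffGauge_le_iff hqc] at hx
    rw [mem_ofPred_eq, wulffGauge_le_iff (h.continuous_perturb hφ s)]
    intro u hu
    have h1 := hx u hu
    rw [inner_add_left, inner_neg_left, real_inner_smul_left, add_mul] at h1
    have h2 : ⟪x, u⟫ * q u ≤ 1 + s * φ u := by rw [hφe u hu]; linarith
    have h3 : |s * φ u| ≤ 1 / 2 := by
      rw [abs_mul]
      have := mul_le_mul hs.le (hφ1 u) (abs_nonneg _) (by norm_num)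
      linarith
    rw [abs_le] at h3
    have h4 := mul_le_mul_of_nonneg_right h2 (show 0 ≤ 1 - s * φ u by linarith)
    rw [perturb, ← mul_assoc]
    nlinarith [sq_nonneg (s * φ u)]
  have h0 := hmin.hasDerivAt_eq_zero hderiv
  have h1 : ∫ u, φ u * (q u)⁻¹ ∂(surfMeasure M) = ∫ u, ⟪v, u⟫ ∂(surfMeasure M) := by
    refine integral_congr_ae ?_
    have : ∀ᵐ u ∂(surfMeasure M), u ∈ unitSphere (d + 1) :=
      mem_ae_iff.2 h.surfMeasure_compl_unitSphere
    filter_upwards [this] with u hu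
    rw [hφe u hu, mul_inv_cancel_right₀ (h.pos u).ne']
  rw [← h1]
  exact (mul_eq_zero.1 h0).resolve_left hC.ne'

/-- The surface area measure is centred. -/
lemma integral_inner_surfMeasure (h : IsInvSupport q M) (v : Euc (d + 1)) :
    ∫ u, ⟪v, u⟫ ∂(surfMeasure M) = 0 := by
  obtain ⟨c, Q, hc, hcQ⟩ := h.exists_bounds
  have hQ : 0 < Q := hc.trans_le ((hcQ 0).1.trans (hcQ 0).2)
  have ht : 0 < (‖v‖ * Q + 1)⁻¹ := by positivity
  have h1 := h.integral_inner_surfMeasure_of_le (v := (‖v‖ * Q + 1)⁻¹ • v) (fun u => (hcQ u).2) (by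
    rw [norm_smul, Real.norm_of_nonneg ht.le, mul_assoc, inv_mul_le_iff₀ (by positivity)]
    linarith)
  simp only [real_inner_smul_left, integral_const_mul] at h1
  exact (mul_eq_zero.1 h1).resolve_left ht.ne'

end IsInvSupport

section Hausdorff

variable {m : ℕ}

open TopologicalSpace in
lemma suppFun_le_add_dist (K K' : NonemptyCompacts (Euc m)) (u : Euc m) :
    suppFun (K : Set (Euc m)) u ≤ suppFun (K' : Set (Euc m)) u + ‖u‖ * dist K K' := by
  rw [suppFun_le_iff K.isCompact K.nonempty]
  intro x hx
  obtain ⟨y, hy, hxy⟩ := K'.isCompact.exists_infDist_eq_dist K'.nonempty x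
  have h1 : dist x y ≤ dist K K' := by
    rw [← hxy, Metric.NonemptyCompacts.dist_eq]
    exact Metric.infDist_le_hausdorffDist_of_mem hx (edist_ne_top K K')
  have h2 : ⟪x - y, u⟫ ≤ ‖x - y‖ * ‖u‖ := real_inner_le_norm _ _
  rw [← dist_eq_norm, inner_sub_left] at h2
  have h3 := inner_le_suppFun K'.isCompact hy u
  nlinarith [norm_nonneg u]

open TopologicalSpace in
lemma upperSemicontinuous_volume_nonemptyCompacts :
    UpperSemicontinuous fun K : NonemptyCompacts (Euc m) => volume (K : Set (Euc m)) := by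
  intro K y hy
  have h1 := (tendsto_measure_cthickening_of_isCompact (μ := volume) K.isCompact).eventually
    (gt_mem_nhds hy)
  obtain ⟨r, hr, H⟩ := Metric.eventually_nhds_iff.1 h1
  have h2 : volume (Metric.cthickening (r / 2) (K : Set (Euc m))) < y := H (by
    rw [Real.dist_eq, sub_zero, abs_of_pos (half_pos hr)]; linarith)
  filter_upwards [Metric.ball_mem_nhds K (half_pos hr)] with K' hK'
  refine (measure_mono fun x hx => ?_).trans_lt h2
  rw [Metric.mem_ball, Metric.NonemptyCompacts.dist_eq] at hK'
  obtain ⟨z, hz, hxz⟩ :=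
    Metric.exists_dist_lt_of_hausdorffDist_lt hx hK' (edist_ne_top K' K)
  exact Metric.mem_cthickening_of_dist_le _ _ _ _ hz hxz.le

open TopologicalSpace in
lemma isClosed_setOf_mem_nonemptyCompacts (x : Euc m) :
    IsClosed {K : NonemptyCompacts (Euc m) | x ∈ K} := by
  have h : {K : NonemptyCompacts (Euc m) | x ∈ K}
      = {K : NonemptyCompacts (Euc m) | Metric.infDist x (K : Set (Euc m)) = 0} := by
    ext K
    exact K.isCompact.isClosed.mem_iff_infDist_zero K.nonempty
  rw [h]
  exact isClosed_eq (Metric.lipschitz_infDist_set x).continuous continuous_const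

end Hausdorff

/-- A finite measure carried by the unit sphere which is centred and charges every open
hemisphere. -/
structure IsMinkowskiMeasure {d : ℕ} (σ : Measure (Euc (d + 1))) : Prop where
  finite : IsFiniteMeasure σ
  compl_sphere : σ (unitSphere (d + 1))ᶜ = 0
  integral_inner : ∀ v, ∫ u, ⟪v, u⟫ ∂σ = 0
  hemisphere_ne_zero : ∀ v ≠ 0, σ {u | u ∈ unitSphere (d + 1) ∧ 0 < ⟪v, u⟫} ≠ 0

namespace IsMinkowskiMeasure

variable {d : ℕ} {σ : Measure (Euc (d + 1))}

lemma ae_mem (hσ : IsMinkowskiMeasure σ) : ∀ᵐ u ∂σ, u ∈ unitSphere (d + 1) :=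
  mem_ae_iff.2 hσ.compl_sphere

lemma integrable (hσ : IsMinkowskiMeasure σ) {f : Euc (d + 1) → ℝ} (hf : Continuous f) :
    Integrable f σ :=
  have := hσ.finite
  integrable_of_continuous_of_sphere hσ.compl_sphere hf

lemma integral_mono (hσ : IsMinkowskiMeasure σ) {f g : Euc (d + 1) → ℝ} (hf : Continuous f)
    (hg : Continuous g) (hfg : ∀ u ∈ unitSphere (d + 1), f u ≤ g u) :
    ∫ u, f u ∂σ ≤ ∫ u, g u ∂σ :=
  integral_mono_ae (hσ.integrable hf) (hσ.integrable hg) (hσ.ae_mem.mono hfg)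

lemma exists_le_integral_posPart (hσ : IsMinkowskiMeasure σ) :
    ∃ c : ℝ, 0 < c ∧ ∀ x, c * ‖x‖ ≤ ∫ u, max ⟪x, u⟫ 0 ∂σ := by
  have := hσ.finite
  set F : Euc (d + 1) → ℝ := fun x => ∫ u, max ⟪x, u⟫ 0 ∂σ with hF
  have hcont : ∀ x : Euc (d + 1), Continuous fun u : Euc (d + 1) => max ⟪x, u⟫ (0 : ℝ) :=
    fun x => by fun_prop
  have hlip : LipschitzWith (σ.real univ).toNNReal F := by
    refine LipschitzWith.of_dist_le_mul fun x y => ?_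
    rw [Real.coe_toNNReal _ measureReal_nonneg, Real.dist_eq, hF,
      ← integral_sub (hσ.integrable (hcont x)) (hσ.integrable (hcont y)), mul_comm,
      ← Real.norm_eq_abs]
    refine norm_integral_le_of_norm_le_const (hσ.ae_mem.mono fun u hu => ?_)
    rw [Real.norm_eq_abs]
    refine (abs_max_sub_max_le_abs _ _ _).trans ?_
    rw [← inner_sub_left, dist_eq_norm]
    simpa [mem_unitSphere.1 hu] using abs_real_inner_le_norm (x - y) u
  have hpos : ∀ x ∈ unitSphere (d + 1), 0 < F x := by
    intro x hx
    have hx0 : x ≠ 0 := by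
      rintro rfl
      simp [mem_unitSphere] at hx
    rw [hF]
    refine (integral_pos_iff_support_of_nonneg (fun u => le_max_right _ _)
      (hσ.integrable (hcont x))).2 (lt_of_lt_of_le (pos_iff_ne_zero.2 (hσ.hemisphere_ne_zero x hx0))
        (measure_mono ?_))
    rintro u ⟨-, hu⟩
    simp only [Function.mem_support]
    exact (lt_max_of_lt_left hu).ne'
  obtain ⟨x₀, hx₀, hmin⟩ := (isCompact_unitSphere (d + 1)).exists_isMinOn (unitSphere_nonempty d)
    hlip.continuous.continuousOn
  refine ⟨F x₀, hpos x₀ hx₀, fun x => ?_⟩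
  rcases eq_or_ne x 0 with rfl | hx
  · simp
  have hn : 0 < ‖x‖ := norm_pos_iff.2 hx
  have h1 : F x₀ ≤ F (‖x‖⁻¹ • x) := hmin (mem_unitSphere.2 (by
    rw [norm_smul, norm_inv, norm_norm, inv_mul_cancel₀ hn.ne']))
  have h2 : F (‖x‖⁻¹ • x) = ‖x‖⁻¹ * F x := by
    simp only [hF]
    rw [← integral_const_mul]
    congr 1
    ext u
    rw [real_inner_smul_left, mul_max_of_nonneg _ _ (inv_nonneg.2 hn.le), mul_zero]
  rw [h2] at h1
  calc F x₀ * ‖x‖ ≤ ‖x‖⁻¹ * F x * ‖x‖ := mul_le_mul_of_nonneg_right h1 hn.le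
    _ = F x := by field_simp

lemma norm_le_of_integral_suppFun_le (hσ : IsMinkowskiMeasure σ) {c : ℝ} (hc : 0 < c)
    (h : ∀ x, c * ‖x‖ ≤ ∫ u, max ⟪x, u⟫ 0 ∂σ) {K : Set (Euc (d + 1))} (hK : IsCompact K)
    (h0 : 0 ∈ K) (hI : ∫ u, suppFun K u ∂σ ≤ 1) : K ⊆ Metric.closedBall 0 (1 / c) := by
  intro x hx
  rw [mem_closedBall_zero_iff, le_div_iff₀ hc, mul_comm]
  refine (h x).trans (le_trans (hσ.integral_mono (by fun_prop)
    (continuous_suppFun hK ⟨0, h0⟩) fun u _ => ?_) hI)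
  refine max_le (inner_le_suppFun hK hx u) ?_
  simpa using inner_le_suppFun hK h0 u

open TopologicalSpace in
lemma continuous_integral_suppFun (hσ : IsMinkowskiMeasure σ) :
    Continuous fun K : NonemptyCompacts (Euc (d + 1)) =>
      ∫ u, suppFun (K : Set (Euc (d + 1))) u ∂σ := by
  have := hσ.finite
  have hlip : LipschitzWith (σ.real univ).toNNReal
      fun K : NonemptyCompacts (Euc (d + 1)) => ∫ u, suppFun (K : Set (Euc (d + 1))) u ∂σ := by
    refine LipschitzWith.of_dist_le_mul fun K K' => ?_
    rw [Real.coe_toNNReal _ measureReal_nonneg, Real.dist_eq,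
      ← integral_sub (hσ.integrable (continuous_suppFun K.isCompact K.nonempty))
        (hσ.integrable (continuous_suppFun K'.isCompact K'.nonempty)), mul_comm,
      ← Real.norm_eq_abs]
    refine norm_integral_le_of_norm_le_const (hσ.ae_mem.mono fun u hu => ?_)
    have h1 := suppFun_le_add_dist K K' u
    have h2 := suppFun_le_add_dist K' K u
    rw [mem_unitSphere.1 hu] at h1 h2
    rw [dist_comm] at h2
    rw [Real.norm_eq_abs, abs_le]
    constructor <;> linarith
  exact hlip.continuous

/-- Among compact sets containing the origin whose support function has integral at most `1`,
one has maximal volume. -/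
lemma exists_isCompact_forall_volume_le (hσ : IsMinkowskiMeasure σ) :
    ∃ K : Set (Euc (d + 1)), IsCompact K ∧ 0 ∈ K ∧ ∫ u, suppFun K u ∂σ ≤ 1 ∧
      ∀ N : Set (Euc (d + 1)), IsCompact N → 0 ∈ N → ∫ u, suppFun N u ∂σ ≤ 1 →
        volume N ≤ volume K := by
  obtain ⟨c, hc, hcx⟩ := hσ.exists_le_integral_posPart
  set S : Set (TopologicalSpace.NonemptyCompacts (Euc (d + 1))) :=
    {K | (K : Set (Euc (d + 1))) ⊆ Metric.closedBall 0 (1 / c)} ∩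
      ({K | 0 ∈ K} ∩ {K | ∫ u, suppFun (K : Set (Euc (d + 1))) u ∂σ ≤ 1}) with hS
  have hcpt : IsCompact S :=
    (TopologicalSpace.NonemptyCompacts.isCompact_subsets_of_isCompact
      (isCompact_closedBall (0 : Euc (d + 1)) (1 / c))).inter_right
      ((isClosed_setOf_mem_nonemptyCompacts 0).inter
        (isClosed_le hσ.continuous_integral_suppFun continuous_const))
  have hmem : ∀ N : Set (Euc (d + 1)), ∀ hN : IsCompact N, ∀ h0 : 0 ∈ N,
      ∫ u, suppFun N u ∂σ ≤ 1 → (⟨⟨N, hN⟩, ⟨0, h0⟩⟩ : TopologicalSpace.NonemptyCompacts _) ∈ S :=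
    fun N hN h0 hI => ⟨hσ.norm_le_of_integral_suppFun_le hc hcx hN h0 hI, h0, hI⟩
  have hne : S.Nonempty := by
    refine ⟨_, hmem {0} isCompact_singleton rfl ?_⟩
    have : ∀ u : Euc (d + 1), suppFun {(0 : Euc (d + 1))} u = 0 := fun u => by simp [suppFun]
    simp [this]
  obtain ⟨K, ⟨-, hK0, hKI⟩, hmax⟩ := UpperSemicontinuousOn.exists_isMaxOn hne hcpt
    (upperSemicontinuous_volume_nonemptyCompacts.upperSemicontinuousOn S)
  exact ⟨K, K.isCompact, hK0, hKI, fun N hN h0 hI => hmax (hmem N hN h0 hI)⟩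

end IsMinkowskiMeasure

lemma suppFun_smul_le {m : ℕ} {N : Set (Euc m)} (hN : IsCompact N) (hne : N.Nonempty) {a : ℝ}
    (ha : 0 ≤ a) (u : Euc m) : suppFun (a • N) u ≤ a * suppFun N u := by
  rw [suppFun_le_iff (hN.smul a) hne.smul_set]
  rintro _ ⟨x, hx, rfl⟩
  simp only [real_inner_smul_left]
  exact mul_le_mul_of_nonneg_left (inner_le_suppFun hN hx u) ha

lemma inner_le_suppFun_of_mem_closure_convexHull {m : ℕ} {N : Set (Euc m)}
    (hN : IsCompact N) {x : Euc m} (hx : x ∈ closure (convexHull ℝ N)) (u : Euc m) :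
    ⟪x, u⟫ ≤ suppFun N u := by
  have hcl : IsClosed {x : Euc m | ⟪x, u⟫ ≤ suppFun N u} :=
    isClosed_le (by fun_prop) continuous_const
  have hcv : Convex ℝ {x : Euc m | ⟪x, u⟫ ≤ suppFun N u} :=
    convex_halfSpace_le ⟨fun x y => inner_add_left x y u, fun a x => real_inner_smul_left x u a⟩ _
  exact closure_minimal (convexHull_min (fun y hy => inner_le_suppFun hN hy u) hcv) hcl hx

namespace IsMinkowskiMeasure

variable {d : ℕ} {σ : Measure (Euc (d + 1))}

lemma exists_convex_forall_volume_le (hσ : IsMinkowskiMeasure σ) :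
    ∃ K : Set (Euc (d + 1)), Convex ℝ K ∧ IsCompact K ∧ ∫ u, suppFun K u ∂σ ≤ 1 ∧
      0 ∈ K ∧ ∀ N : Set (Euc (d + 1)), IsCompact N → 0 ∈ N → ∫ u, suppFun N u ∂σ ≤ 1 →
        volume N ≤ volume K := by
  obtain ⟨K, hK, h0, hI, hmax⟩ := hσ.exists_isCompact_forall_volume_le
  have hcl : IsCompact (closure (convexHull ℝ K)) :=
    (isBounded_convexHull.2 hK.isBounded).isCompact_closure
  have hsub : K ⊆ closure (convexHull ℝ K) := (subset_convexHull ℝ K).trans subset_closure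
  refine ⟨closure (convexHull ℝ K), (convex_convexHull ℝ K).closure, hcl,
    le_trans (hσ.integral_mono (continuous_suppFun hcl ⟨0, hsub h0⟩)
      (continuous_suppFun hK ⟨0, h0⟩) fun u _ => ?_) hI, hsub h0,
    fun N hN hN0 hNI => (hmax N hN hN0 hNI).trans (measure_mono hsub)⟩
  rw [suppFun_le_iff hcl ⟨0, hsub h0⟩]
  exact fun x hx => inner_le_suppFun_of_mem_closure_convexHull hK hx u

lemma exists_convexBody_forall_volume_le (hσ : IsMinkowskiMeasure σ) :
    ∃ M : Set (Euc (d + 1)), Convex ℝ M ∧ IsCompact M ∧ 0 ∈ interior M ∧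
      ∫ u, suppFun M u ∂σ ≤ 1 ∧
      ∀ N : Set (Euc (d + 1)), IsCompact N → 0 ∈ N → ∫ u, suppFun N u ∂σ ≤ 1 →
        volume N ≤ volume M := by
  have := hσ.finite
  obtain ⟨K, hKconv, hK, hI, h0, hmax⟩ := hσ.exists_convex_forall_volume_le
  have hpos : 0 < volume K := by
    set r : ℝ := (σ.real univ + 1)⁻¹ with hr
    have hσ0 : 0 ≤ σ.real univ := measureReal_nonneg
    have hr0 : 0 < r := by positivity
    have hB := isCompact_closedBall (0 : Euc (d + 1)) r
    have h0B : (0 : Euc (d + 1)) ∈ Metric.closedBall (0 : Euc (d + 1)) r :=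
      Metric.mem_closedBall_self hr0.le
    refine lt_of_lt_of_le (Metric.measure_closedBall_pos volume (0 : Euc (d + 1)) hr0)
      (hmax _ hB h0B ?_)
    refine (hσ.integral_mono (continuous_suppFun hB ⟨0, h0B⟩) continuous_const
      (g := fun _ => r) fun u hu => ?_).trans ?_
    · have := suppFun_le_norm hB ⟨0, h0B⟩ (fun x hx => mem_closedBall_zero_iff.1 hx) u
      rwa [mem_unitSphere.1 hu, mul_one] at this
    · rw [integral_const, smul_eq_mul, hr, ← div_eq_mul_inv, div_le_one (by positivity)]
      linarith
  obtain ⟨z, hz⟩ : (interior K).Nonempty := by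
    by_contra hne
    rw [not_nonempty_iff_eq_empty] at hne
    have h1 := hKconv.addHaar_frontier volume
    rw [hK.isClosed.frontier_eq, hne, sdiff_empty] at h1
    exact hpos.ne' h1
  have hzv : ∀ N : Set (Euc (d + 1)), volume ((-z) +ᵥ N) = volume N := measure_vadd volume (-z)
  have hMc : IsCompact ((-z) +ᵥ K) := hK.vadd (-z)
  have h0i : (0 : Euc (d + 1)) ∈ interior ((-z) +ᵥ K) := by
    rw [interior_vadd]
    exact ⟨z, hz, by simp⟩
  refine ⟨(-z) +ᵥ K, hKconv.vadd (-z), hMc, h0i, ?_, ?_⟩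
  · have hcs := continuous_suppFun hK ⟨0, h0⟩
    calc ∫ u, suppFun ((-z) +ᵥ K) u ∂σ ≤ ∫ u, (suppFun K u - ⟪z, u⟫) ∂σ := by
          refine hσ.integral_mono (continuous_suppFun hMc ⟨0, interior_subset h0i⟩)
            (by fun_prop) fun u _ => ?_
          rw [suppFun_le_iff hMc ⟨0, interior_subset h0i⟩]
          rintro _ ⟨x, hx, rfl⟩
          have := inner_le_suppFun hK hx u
          simp only [vadd_eq_add, inner_add_left, inner_neg_left]
          linarith
      _ = ∫ u, suppFun K u ∂σ := by
          rw [integral_sub (hσ.integrable hcs) (hσ.integrable (by fun_prop)), hσ.integral_inner,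
            sub_zero]
      _ ≤ 1 := hI
  · intro N hN hN0 hNI
    rw [hzv]
    exact hmax N hN hN0 hNI

/-- A convex body of maximal volume among the compact sets `N` containing the origin, for the
constraint given by the integral of the support function, in scale-invariant form. -/
lemma exists_convexBody_forall_volume_le_pow (hσ : IsMinkowskiMeasure σ) :
    ∃ M : Set (Euc (d + 1)), Convex ℝ M ∧ IsCompact M ∧ 0 ∈ interior M ∧
      ∫ u, suppFun M u ∂σ ≤ 1 ∧
      ∀ N : Set (Euc (d + 1)), IsCompact N → 0 ∈ N → ∀ B : ℝ, 0 < B →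
        ∫ u, suppFun N u ∂σ ≤ B → volume N ≤ ENNReal.ofReal (B ^ (d + 1)) * volume M := by
  obtain ⟨M, hMconv, hM, h0, hI, hmax⟩ := hσ.exists_convexBody_forall_volume_le
  refine ⟨M, hMconv, hM, h0, hI, fun N hN hN0 B hB hNI => ?_⟩
  have h1 : volume (B⁻¹ • N) ≤ volume M := by
    have h0' : (0 : Euc (d + 1)) ∈ B⁻¹ • N := ⟨0, hN0, by simp⟩
    have hcs := continuous_suppFun hN ⟨0, hN0⟩
    refine hmax _ (hN.smul _) h0' ?_
    refine (hσ.integral_mono (continuous_suppFun (hN.smul _) ⟨0, h0'⟩) (hcs.const_mul B⁻¹)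
      fun u _ => suppFun_smul_le hN ⟨0, hN0⟩ (inv_nonneg.2 hB.le) u).trans ?_
    rw [integral_const_mul, inv_mul_le_iff₀ hB, mul_one]
    exact hNI
  have h2 : volume N = ENNReal.ofReal (B ^ (d + 1)) * volume (B⁻¹ • N) := by
    conv_lhs => rw [← smul_inv_smul₀ hB.ne' N]
    rw [Measure.addHaar_smul, finrank_euclideanSpace_fin, abs_of_pos (by positivity)]
  rw [h2]
  gcongr

end IsMinkowskiMeasure

namespace IsInvSupport

variable {d : ℕ} {M : Set (Euc (d + 1))} {q φ : Euc (d + 1) → ℝ}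

lemma suppFun_eq (h : IsInvSupport q M) {u : Euc (d + 1)} (hu : u ∈ unitSphere (d + 1)) :
    suppFun M u = (q u)⁻¹ :=
  (h.isGreatest u hu).csSup_eq

lemma isCompact_perturb (h : IsInvSupport q M) (hφ : Continuous φ)
    (hφ1 : ∀ u, |φ u| ≤ 1) {s : ℝ} (hs : |s| ≤ 1 / 2) :
    IsCompact {x | wulffGauge (perturb q φ s) x ≤ 1} := by
  obtain ⟨c, Q, hc, hcQ⟩ := h.exists_bounds
  have hbd : ∀ u, |perturb q φ s u| ≤ ((Q * (3 / 2)).toNNReal : ℝ) := by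
    intro u
    have h3 : |s * φ u| ≤ 1 / 2 := by
      rw [abs_mul]
      have := mul_le_mul hs (hφ1 u) (abs_nonneg _) (by norm_num)
      linarith
    rw [abs_le] at h3
    have hQ : 0 ≤ Q := (h.pos u).le.trans (hcQ u).2
    rw [Real.coe_toNNReal _ (by positivity), perturb, abs_mul, abs_of_pos (h.pos u)]
    refine mul_le_mul (hcQ u).2 (abs_le.2 ⟨by linarith, by linarith⟩) (abs_nonneg _) hQ
  have hcont := (lipschitzWith_wulffGauge (h.continuous_perturb hφ s) hbd).continuous
  refine Metric.isCompact_of_isClosed_isBounded (isClosed_le hcont continuous_const) ?_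
  refine (Metric.isBounded_closedBall (x := (0 : Euc (d + 1))) (r := 2 / c)).subset fun x hx => ?_
  have h1 := (h.norm_le_wulffGauge_perturb hφ hφ1 (fun u => (hcQ u).1) hs x).trans hx
  rw [mem_closedBall_zero_iff, le_div_iff₀ hc]
  linarith

lemma zero_mem_perturb (h : IsInvSupport q M) (hφ : Continuous φ) (s : ℝ) :
    (0 : Euc (d + 1)) ∈ {x | wulffGauge (perturb q φ s) x ≤ 1} := by
  rw [mem_ofPred_eq, wulffGauge_le_iff (h.continuous_perturb hφ s)]
  intro u _
  simp

lemma suppFun_perturb_le (h : IsInvSupport q M) (hφ : Continuous φ)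
    (hφ1 : ∀ u, |φ u| ≤ 1) {s : ℝ} (hs : |s| ≤ 1 / 2) {u : Euc (d + 1)}
    (hu : u ∈ unitSphere (d + 1)) :
    suppFun {x | wulffGauge (perturb q φ s) x ≤ 1} u
      ≤ (q u)⁻¹ + s * (φ u * (q u)⁻¹) + 2 * s ^ 2 * (q u)⁻¹ := by
  rw [suppFun_le_iff (h.isCompact_perturb hφ hφ1 hs) ⟨0, h.zero_mem_perturb hφ s⟩]
  intro x hx
  have hq := h.pos u
  have h1 := (wulffGauge_le_iff (h.continuous_perturb hφ s) x 1).1 hx u hu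
  have h2 : |s * φ u| ≤ |s| := by
    rw [abs_mul]
    exact mul_le_of_le_one_right (abs_nonneg _) (hφ1 u)
  have h3 : (s * φ u) ^ 2 ≤ s ^ 2 := sq_le_sq.2 h2
  have h4 := abs_le.1 (h2.trans hs)
  rw [perturb] at h1
  set a := s * φ u
  have h5 : ⟪x, u⟫ * q u ≤ 1 + a + 2 * s ^ 2 := by
    have h6 : 0 < 1 - a := by linarith
    refine le_of_mul_le_mul_right ?_ h6
    calc ⟪x, u⟫ * q u * (1 - a) ≤ 1 := by rw [mul_assoc]; exact h1
      _ ≤ (1 + a + 2 * a ^ 2) * (1 - a) := by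
          nlinarith [mul_nonneg (sq_nonneg a) (by linarith : 0 ≤ 1 - 2 * a)]
      _ ≤ (1 + a + 2 * s ^ 2) * (1 - a) := by gcongr
  have h7 : ⟪x, u⟫ ≤ (1 + a + 2 * s ^ 2) * (q u)⁻¹ := by
    rw [← div_eq_mul_inv, le_div_iff₀ hq]
    exact h5
  calc ⟪x, u⟫ ≤ (1 + a + 2 * s ^ 2) * (q u)⁻¹ := h7
    _ = _ := by ring

lemma continuous_inv (h : IsInvSupport q M) : Continuous fun u => (q u)⁻¹ :=
  h.continuous.inv₀ fun u => (h.pos u).ne'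

lemma volume_pos (h : IsInvSupport q M) (h0 : 0 ∈ interior M) : 0 < (volume M).toReal :=
  ENNReal.toReal_pos ((isOpen_interior.measure_pos volume ⟨0, h0⟩).trans_le
    (measure_mono interior_subset)).ne' h.volume_ne_top

/-- Euler–Lagrange equation for the volume maximiser. -/
lemma exists_integral_surfMeasure_eq (h : IsInvSupport q M) (h0 : 0 ∈ interior M)
    {σ : Measure (Euc (d + 1))} (hσ : IsMinkowskiMeasure σ) (hI : ∫ u, suppFun M u ∂σ ≤ 1)
    (hopt : ∀ N : Set (Euc (d + 1)), IsCompact N → 0 ∈ N → ∀ B : ℝ, 0 < B →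
        ∫ u, suppFun N u ∂σ ≤ B → volume N ≤ ENNReal.ofReal (B ^ (d + 1)) * volume M) :
    ∃ a : ℝ, 0 < a ∧ ∀ φ, Continuous φ → (∀ u, |φ u| ≤ 1) →
      ∫ u, φ u * (q u)⁻¹ ∂(surfMeasure M) = a * ∫ u, φ u * (q u)⁻¹ ∂σ := by
  obtain ⟨C, hC, H⟩ := h.exists_hasDerivAt_volume
  have hV := h.volume_pos h0
  refine ⟨(volume M).toReal * (d + 1) / C, by positivity, fun φ hφ hφ1 => ?_⟩
  set V : ℝ → ℝ := fun s => (volume {x | wulffGauge (perturb q φ s) x ≤ 1}).toReal with hVdef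
  set b : ℝ := ∫ u, φ u * (q u)⁻¹ ∂σ with hb
  set B : ℝ → ℝ := fun s => 1 + s * b + 2 * s ^ 2 with hB
  have hqi := h.continuous_inv
  have hJ : ∫ u, (q u)⁻¹ ∂σ ≤ 1 := by
    rw [← integral_congr_ae (hσ.ae_mem.mono fun u hu => h.suppFun_eq hu)]
    exact hI
  have hBd : HasDerivAt B b 0 := by
    have h1 := (((hasDerivAt_id (0 : ℝ)).mul_const b).const_add 1).add
      (((hasDerivAt_id (0 : ℝ)).pow 2).const_mul 2)
    convert! h1 using 1
    simp
  have hBpos : ∀ᶠ s in 𝓝 (0 : ℝ), 0 < B s :=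
    hBd.continuousAt.eventually (lt_mem_nhds (by simp [hB]))
  have hp0 : perturb q φ 0 = q := by ext u; simp [perturb]
  have hV0 : V 0 = (volume M).toReal := by
    simp only [hVdef, hp0, h.gauge_le_one_iff]
    rfl
  have hmin : IsLocalMin (fun s => (volume M).toReal * B s ^ (d + 1) - V s) 0 := by
    filter_upwards [Metric.ball_mem_nhds (0 : ℝ) (by norm_num : (0 : ℝ) < 1 / 2), hBpos]
      with s hs hBs
    rw [mem_ball_zero_iff, Real.norm_eq_abs] at hs
    rw [hV0]
    have h1 : ∫ u, suppFun {x | wulffGauge (perturb q φ s) x ≤ 1} u ∂σ ≤ B s := by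
      refine (hσ.integral_mono (continuous_suppFun (h.isCompact_perturb hφ hφ1 hs.le)
        ⟨0, h.zero_mem_perturb hφ s⟩) (by fun_prop)
        fun u hu => h.suppFun_perturb_le hφ hφ1 hs.le hu).trans ?_
      have i1 := hσ.integrable hqi
      have i2 : Integrable (fun u => s * (φ u * (q u)⁻¹)) σ :=
        (hσ.integrable (hφ.mul hqi)).const_mul s
      rw [integral_add (f := fun u => (q u)⁻¹ + s * (φ u * (q u)⁻¹)) (i1.add i2)
        (i1.const_mul _), integral_add i1 i2, integral_const_mul, integral_const_mul]
      have := mul_le_mul_of_nonneg_left hJ (show 0 ≤ 2 * s ^ 2 by positivity)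
      simp only [hB]
      linarith
    have h2 := hopt _ (h.isCompact_perturb hφ hφ1 hs.le) (h.zero_mem_perturb hφ s) (B s) hBs h1
    have h3 := ENNReal.toReal_mono (ENNReal.mul_ne_top ENNReal.ofReal_ne_top h.volume_ne_top) h2
    rw [ENNReal.toReal_mul, ENNReal.toReal_ofReal (by positivity)] at h3
    simp only [hVdef]
    simp only [hB] at h3 ⊢
    norm_num
    linarith
  have hder := ((hBd.pow (d + 1)).const_mul (volume M).toReal).sub (H φ hφ hφ1)
  have h4 := hmin.hasDerivAt_eq_zero hder
  have hB0 : B 0 = 1 := by simp [hB]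
  rw [hB0, one_pow, mul_one] at h4
  push_cast at h4
  rw [div_mul_eq_mul_div, eq_div_iff hC.ne']
  linarith

end IsInvSupport

/-- Existence in Minkowski's problem, up to a dilation. -/
lemma IsMinkowskiMeasure.exists_surfMeasure_eq_smul {d : ℕ} {σ : Measure (Euc (d + 1))}
    (hσ : IsMinkowskiMeasure σ) :
    ∃ M : Set (Euc (d + 1)), IsConvexBody M ∧ ∃ a : ℝ, 0 < a ∧
      surfMeasure M = ENNReal.ofReal a • σ := by
  obtain ⟨M, hMconv, hM, h0, hI, hopt⟩ := hσ.exists_convexBody_forall_volume_le_pow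
  obtain ⟨q, h⟩ := exists_isInvSupport hMconv hM h0
  obtain ⟨a, ha, H⟩ := h.exists_integral_surfMeasure_eq h0 hσ hI hopt
  refine ⟨M, ⟨hMconv, hM, 0, h0⟩, a, ha, ?_⟩
  have := h.isFiniteMeasure_surfMeasure
  have := hσ.finite
  have : IsFiniteMeasure (ENNReal.ofReal a • σ) := σ.smul_finite ENNReal.ofReal_ne_top
  obtain ⟨c, Q, hc, hcQ⟩ := h.exists_bounds
  have hQ : 0 < Q := hc.trans_le ((hcQ 0).1.trans (hcQ 0).2)
  refine ext_of_forall_integral_eq_of_IsFiniteMeasure fun f => ?_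
  have hk : 0 < (‖f‖ + 1) * Q := by positivity
  have hqc := h.continuous
  have h1 := H (fun u => ((‖f‖ + 1) * Q)⁻¹ * (f u * q u)) (by fun_prop) (fun u => by
    rw [abs_mul, abs_mul, abs_of_pos (h.pos u), abs_of_pos (inv_pos.2 hk), inv_mul_le_iff₀ hk,
      mul_one]
    have h2 : |f u| ≤ ‖f‖ := f.norm_coe_le_norm u
    exact mul_le_mul (by linarith) (hcQ u).2 (h.pos u).le (by positivity))
  have h3 : ∀ u, ((‖f‖ + 1) * Q)⁻¹ * (f u * q u) * (q u)⁻¹ = ((‖f‖ + 1) * Q)⁻¹ * f u := by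
    intro u
    rw [mul_assoc, mul_inv_cancel_right₀ (h.pos u).ne']
  simp only [h3, integral_const_mul] at h1
  rw [integral_smul_measure, ENNReal.toReal_ofReal ha.le, smul_eq_mul]
  refine mul_left_cancel₀ (inv_pos.2 hk).ne' (h1.trans ?_)
  ring

section Similarity

variable {m : ℕ} {K : Set (Euc m)} {l : ℝ} {z : Euc m}

open Classical in
lemma gaussMap_similarity (e : Euc m ≃ₜ Euc m) (hl : 0 < l) (he : ∀ x, e x = z + l • x)
    (x : Euc m) : gaussMap (e '' K) (e x) = gaussMap K x := by
  have h : IsOutwardNormalAt (e '' K) (e x) = IsOutwardNormalAt K x := by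
    funext n
    have h1 : (∀ y ∈ e '' K, ⟪y - e x, n⟫ ≤ 0) ↔ ∀ y ∈ K, ⟪y - x, n⟫ ≤ 0 := by
      rw [forall_mem_image]
      refine forall₂_congr fun y _ => ?_
      rw [he, he, add_sub_add_left_eq_sub, ← smul_sub, real_inner_smul_left,
        mul_nonpos_iff_pos_imp_nonpos]
      constructor
      · exact fun h => h.1 hl
      · exact fun h => ⟨fun _ => h, fun _ => hl.le⟩
    rw [IsOutwardNormalAt, IsOutwardNormalAt, h1, ← e.image_frontier,
      e.injective.mem_set_image]
  exact congrArg (fun P : Euc m → Prop => if h : ∃ n, P n then h.choose else 0) h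

lemma hausdorffMeasure_restrict_image_similarity (e : Euc m ≃ₜ Euc m) (hl : 0 < l)
    (he : ∀ x, e x = z + l • x) {s : ℝ} (hs : 0 ≤ s) (F : Set (Euc m)) :
    (μH[s] : Measure (Euc m)).restrict (e '' F)
      = ENNReal.ofReal (l ^ s) • Measure.map e (μH[s].restrict F) := by
  ext A hA
  have h1 : ∀ B : Set (Euc m), e '' B = z +ᵥ l • B := by
    intro B
    rw [← image_smul, ← image_vadd, image_image]
    exact image_congr fun x _ => he x
  have h2 : A ∩ e '' F = e '' (e ⁻¹' A ∩ F) := by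
    rw [image_preimage_inter]
  rw [Measure.restrict_apply hA, Measure.smul_apply, Measure.map_apply e.measurable hA,
    Measure.restrict_apply (e.measurable hA), h2, h1, measure_vadd,
    Measure.hausdorffMeasure_smul₀ hs hl.ne', ENNReal.smul_def, smul_eq_mul, smul_eq_mul]
  congr 1
  rw [ENNReal.ofReal, ENNReal.coe_inj]
  ext
  rw [NNReal.coe_rpow, coe_nnnorm, Real.norm_of_nonneg hl.le, Real.coe_toNNReal _ (by positivity)]

lemma surfMeasure_similarity (hm : 1 ≤ m) (hl : 0 < l) :
    surfMeasure (z +ᵥ l • K) = ENNReal.ofReal (l ^ ((m : ℝ) - 1)) • surfMeasure K := by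
  set e : Euc m ≃ₜ Euc m := (Homeomorph.smulOfNeZero l hl.ne').trans (Homeomorph.addLeft z)
  have he : ∀ x, e x = z + l • x := fun _ => rfl
  have hK : z +ᵥ l • K = e '' K := by
    rw [← image_smul, ← image_vadd, image_image]
    exact image_congr fun x _ => (he x).symm
  have hs : 0 ≤ (m : ℝ) - 1 := by
    have : (1 : ℝ) ≤ m := by exact_mod_cast hm
    linarith
  have hg : gaussMap (e '' K) ∘ e = gaussMap K := funext (gaussMap_similarity e hl he)
  rw [surfMeasure, surfMeasure, hK, ← e.image_frontier,
    hausdorffMeasure_restrict_image_similarity e hl he hs, Measure.map_smul, ← hg]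
  congr 1
  have hemb := e.measurableEmbedding
  by_cases hae : AEMeasurable (gaussMap (e '' K))
      (Measure.map e (μH[(m : ℝ) - 1].restrict (frontier K)))
  · exact AEMeasurable.map_map_of_aemeasurable hae e.measurable.aemeasurable
  · rw [Measure.map_of_not_aemeasurable hae, Measure.map_of_not_aemeasurable]
    rwa [← hemb.aemeasurable_map_iff]

lemma surfMeasure_vadd (hm : 1 ≤ m) (z : Euc m) : surfMeasure (z +ᵥ K) = surfMeasure K := by
  simpa using surfMeasure_similarity (K := K) (z := z) hm one_pos

lemma surfMeasure_smul (hm : 1 ≤ m) (hl : 0 < l) :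
    surfMeasure (l • K) = ENNReal.ofReal (l ^ ((m : ℝ) - 1)) • surfMeasure K := by
  simpa using surfMeasure_similarity (K := K) (z := 0) hm hl

end Similarity

/-- Existence in Minkowski's problem. -/
lemma IsMinkowskiMeasure.exists_surfMeasure_eq {d : ℕ} (hd : 1 ≤ d) {σ : Measure (Euc (d + 1))}
    (hσ : IsMinkowskiMeasure σ) :
    ∃ M : Set (Euc (d + 1)), IsConvexBody M ∧ surfMeasure M = σ := by
  obtain ⟨M, ⟨hconv, hcpt, z, hz⟩, a, ha, h⟩ := hσ.exists_surfMeasure_eq_smul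
  have hd0 : (0 : ℝ) < d := by exact_mod_cast hd
  set l : ℝ := a⁻¹ ^ ((d : ℝ)⁻¹) with hl
  have hl0 : 0 < l := by positivity
  refine ⟨l • M, ⟨hconv.smul l, hcpt.smul l, l • z, ?_⟩, ?_⟩
  · rw [interior_smul₀ hl0.ne']
    exact smul_mem_smul_set hz
  · have h1 : l ^ (((d + 1 : ℕ) : ℝ) - 1) = a⁻¹ := by
      push_cast
      rw [add_sub_cancel_right, hl, Real.rpow_inv_rpow (by positivity) hd0.ne']
    rw [surfMeasure_smul (by omega) hl0, h1, h, smul_smul, ← ENNReal.ofReal_mul (by positivity),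
      inv_mul_cancel₀ ha.ne', ENNReal.ofReal_one, one_smul]

/-- The surface area measure of a convex body satisfies the hypotheses of Minkowski's problem. -/
lemma IsConvexBody.isMinkowskiMeasure {d : ℕ} {K : Set (Euc (d + 1))} (hK : IsConvexBody K) :
    IsMinkowskiMeasure (surfMeasure K) := by
  obtain ⟨hconv, hcpt, z, hz⟩ := hK
  have h0 : (0 : Euc (d + 1)) ∈ interior ((-z) +ᵥ K) := by
    rw [interior_vadd]
    exact ⟨z, hz, by simp⟩
  obtain ⟨q, h⟩ := exists_isInvSupport (hconv.vadd (-z)) (hcpt.vadd (-z)) h0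
  rw [← surfMeasure_vadd (K := K) (by omega) (-z)]
  exact ⟨h.isFiniteMeasure_surfMeasure, h.surfMeasure_compl_unitSphere,
    h.integral_inner_surfMeasure, fun v hv => h.surfMeasure_pos_of_inner_pos hv⟩

lemma IsMinkowskiMeasure.integral_id {d : ℕ} {σ : Measure (Euc (d + 1))}
    (hσ : IsMinkowskiMeasure σ) : ∫ u, u ∂σ = 0 := by
  have := hσ.finite
  refine ext_inner_left ℝ fun v => ?_
  have hi : Integrable (fun u => u) σ :=
    integrable_of_continuous_of_sphere hσ.compl_sphere continuous_id
  rw [inner_zero_right, ← _root_.integral_inner hi]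
  exact hσ.integral_inner v

/-- The difference `μ - t ν` of measures with `ν ≤ μ` and `t < 1`. -/
lemma IsMinkowskiMeasure.sub_smul {d : ℕ} {μ ν : Measure (Euc (d + 1))}
    (hμ : IsMinkowskiMeasure μ) (hν : IsMinkowskiMeasure ν) (hle : ν ≤ μ) {t : ℝ}
    (ht1 : t < 1) :
    ∃ σ : Measure (Euc (d + 1)), IsMinkowskiMeasure σ ∧ σ + ENNReal.ofReal t • ν = μ := by
  have := hμ.finite
  have := hν.finite
  have hfin : IsFiniteMeasure (ENNReal.ofReal t • ν) := ν.smul_finite ENNReal.ofReal_ne_top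
  have hle' : ENNReal.ofReal t • ν ≤ μ := by
    refine le_trans (Measure.le_iff.2 fun A _ => ?_) hle
    rw [Measure.smul_apply, smul_eq_mul]
    exact mul_le_of_le_one_left' (ENNReal.ofReal_le_one.2 ht1.le)
  have hadd : (μ - ENNReal.ofReal t • ν) + ENNReal.ofReal t • ν = μ :=
    Measure.sub_add_cancel_of_le hle'
  set σ := μ - ENNReal.ofReal t • ν with hσ
  have hσμ : σ ≤ μ := Measure.sub_le
  have hσfin : IsFiniteMeasure σ := isFiniteMeasure_of_le μ hσμ
  have hσc : σ (unitSphere (d + 1))ᶜ = 0 := le_antisymm (hμ.compl_sphere ▸ hσμ _) zero_le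
  refine ⟨σ, ⟨hσfin, hσc, fun v => ?_, fun v hv h0 => ?_⟩, hadd⟩
  · have hc : Continuous fun u : Euc (d + 1) => ⟪v, u⟫ := by fun_prop
    have h1 := hμ.integral_inner v
    rw [← hadd, integral_add_measure (integrable_of_continuous_of_sphere hσc hc)
      ((hν.integrable hc).smul_measure ENNReal.ofReal_ne_top), integral_smul_measure,
      hν.integral_inner, smul_zero, add_zero] at h1
    exact h1
  · set A : Set (Euc (d + 1)) := {u | u ∈ unitSphere (d + 1) ∧ 0 < ⟪v, u⟫}
    have h1 : μ A = ENNReal.ofReal t * ν A := by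
      conv_lhs => rw [← hadd, Measure.add_apply, h0, zero_add, Measure.smul_apply, smul_eq_mul]
    have h2 : μ A ≤ ENNReal.ofReal t * μ A := h1.trans_le (by gcongr)
    have h3 : ENNReal.ofReal t * μ A < 1 * μ A :=
      (ENNReal.mul_lt_mul_iff_left (hμ.hemisphere_ne_zero v hv) (measure_ne_top μ A)).2
        (ENNReal.ofReal_lt_one.2 ht1)
    rw [one_mul] at h3
    exact h2.not_gt h3

/-- the decomposition step: if `S(K,·) ≤ S(L,·)` and `0 < t < 1`, then
`μ = S(L,·) - t·S(K,·)` is a nonnegative measure with zero barycenter not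
concentrated on any great subsphere, so by Minkowski's theorem there is a convex
body `M` with `S(M,·) = μ`, and `L = M # (t^{1/(m-1)} K)` (as Blaschke sum, i.e. on
the level of surface area measures). -/
theorem surf_measure_decomposition {m : ℕ} (hm : 2 ≤ m)
    (K L : Set (Euc m)) (hK : IsConvexBody K) (hL : IsConvexBody L)
    (t : ℝ) (ht0 : 0 < t) (ht1 : t < 1)
    (hdom : ∀ U : Set (Euc m), MeasurableSet U → surfMeasure K U ≤ surfMeasure L U) :
    -- `μ = S(L,·) - t S(K,·)` is nonnegative
    (∀ U : Set (Euc m), MeasurableSet U →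
      ENNReal.ofReal t * surfMeasure K U ≤ surfMeasure L U) ∧
    -- `μ` has zero barycenter
    (∫ x, x ∂(surfMeasure L) = t • ∫ x, x ∂(surfMeasure K)) ∧
    -- `μ` is not concentrated on any great subsphere
    (∀ f : Euc m →ₗ[ℝ] ℝ, f ≠ 0 →
      ENNReal.ofReal t * surfMeasure K (unitSphere m \ {x | f x = 0}) <
        surfMeasure L (unitSphere m \ {x | f x = 0})) ∧
    -- the convex body `M` with `S(M,·) = μ`, and `L = M # (t^{1/(m-1)} K)`
    (∃ M : Set (Euc m), IsConvexBody M ∧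
      (∀ U : Set (Euc m), MeasurableSet U →
        surfMeasure M U + ENNReal.ofReal t * surfMeasure K U = surfMeasure L U) ∧
      (∀ U : Set (Euc m), MeasurableSet U →
        surfMeasure M U + surfMeasure ((t ^ (1 / ((m:ℝ) - 1))) • K) U
          = surfMeasure L U)) := by
  obtain ⟨d, rfl⟩ : ∃ d, m = d + 1 := ⟨m - 1, by omega⟩
  have hd : 1 ≤ d := by omega
  have hμ := hL.isMinkowskiMeasure
  have hν := hK.isMinkowskiMeasure
  have hle : surfMeasure K ≤ surfMeasure L := Measure.le_iff.2 hdom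
  have := hμ.finite
  obtain ⟨σ, hσ, hadd⟩ := hμ.sub_smul hν hle ht1
  obtain ⟨M, hM, hMσ⟩ := hσ.exists_surfMeasure_eq hd
  have hsum : ∀ U : Set (Euc (d + 1)),
      surfMeasure M U + ENNReal.ofReal t * surfMeasure K U = surfMeasure L U := by
    intro U
    rw [hMσ, ← hadd, Measure.add_apply, Measure.smul_apply, smul_eq_mul]
  refine ⟨fun U _ => (hsum U).le.trans' le_add_self, ?_, fun f hf => ?_,
    M, hM, fun U _ => hsum U, fun U _ => ?_⟩
  · rw [hμ.integral_id, hν.integral_id, smul_zero]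
  · set A : Set (Euc (d + 1)) := unitSphere (d + 1) \ {x | f x = 0}
    set v : Euc (d + 1) := (InnerProductSpace.toDual ℝ (Euc (d + 1))).symm f.toContinuousLinearMap
    have hfv : ∀ u, ⟪v, u⟫ = f u := fun u => InnerProductSpace.toDual_symm_apply
    have hv : v ≠ 0 := by
      intro h
      refine hf (LinearMap.ext fun u => ?_)
      rw [← hfv, h, inner_zero_left, LinearMap.zero_apply]
    have hA : surfMeasure L A ≠ 0 := by
      refine fun h => hμ.hemisphere_ne_zero v hv (measure_mono_null ?_ h)
      rintro u ⟨hu, hvu⟩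
      rw [hfv] at hvu
      exact ⟨hu, hvu.ne'⟩
    calc ENNReal.ofReal t * surfMeasure K A ≤ ENNReal.ofReal t * surfMeasure L A := by
          gcongr
      _ < 1 * surfMeasure L A :=
          (ENNReal.mul_lt_mul_iff_left hA (measure_ne_top _ A)).2 (ENNReal.ofReal_lt_one.2 ht1)
      _ = surfMeasure L A := one_mul _
  · have hd0 : (0 : ℝ) < d := by exact_mod_cast hd
    have h1 : (t ^ (1 / (((d + 1 : ℕ) : ℝ) - 1))) ^ (((d + 1 : ℕ) : ℝ) - 1) = t := by
      push_cast
      rw [add_sub_cancel_right, one_div, Real.rpow_inv_rpow ht0.le hd0.ne']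
    rw [surfMeasure_smul (by omega) (by positivity), h1, Measure.smul_apply, smul_eq_mul]
    exact hsum U
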